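/- Let γ, δ₀ and the test measures be as in the planar curve setup, with x₀ = γ(0) and R = R(0). Let σ, ε : (0, δ₀] → (0, ∞) satisfy max(σ(δ), ε(δ)) ≤ δ/4 for all δ, suppose there are constants c, C' > 0 with c·δ ≤ ε(δ) ≤ C'·δ for all δ (ε = Θ(δ)), and suppose σ(δ)/δ → 0 as δ → 0⁺ (σ = o(δ)). Then lim_{δ→0⁺} (6/ε(δ)²)·( 1 − W₁(μ_{x₀}^{σ(δ),ε(δ)}, μ_{γ(δ)}^{σ(δ),ε(δ)}) / ‖x₀ − γ(δ)‖ ) = 1/R². -/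

import Mathlib

open MeasureTheory Set Filter

/-- The 1-Wasserstein distance: infimum over couplings of the integral of the distance. -/
noncomputable def W1 {X : Type*} [MeasurableSpace X] [PseudoMetricSpace X]
    (μ ν : Measure X) : ℝ :=
  sInf { c : ℝ | ∃ π : Measure (X × X), IsProbabilityMeasure π ∧
      π.map Prod.fst = μ ∧ π.map Prod.snd = ν ∧ c = ∫ p, dist p.1 p.2 ∂π }

/-- Restriction of the ambient volume measure to a set, normalized to a probability measure. -/
noncomputable def normRestrict {X : Type*} [MeasureSpace X] (s : Set X) : Measure X :=
  (volume s)⁻¹ • volume.restrict s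

/-!
Let `h = δ / 2` be the midpoint parameter, so that the two tubes are centred at `h ± δ / 2`. In
Fermi coordinates both are rectangles, carrying Lebesgue measure with density `1 - k s * β` (`k`
is the signed curvature), and the reflection `s ↦ 2 * h - s` exchanges the rectangles. Since the
densities differ by `O(δ * σ)`, the reflection transports all but a fraction `O(δ * σ)` of the
mass.

The linear functional `⟪·, deriv γ h⟫` is a nearly optimal Kantorovich potential: the length of a
displacement exceeds its projection by a term quadratic in the perpendicular component, and for
reflected points that component is `O(δ ^ 3)` by symmetry. Hence `W1` is the difference of the
barycentres in the direction `deriv γ h`, up to `O(δ ^ 5 + σ * δ ^ 2)`. The symmetric Taylor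
expansion of the barycentres and of the chord `‖γ 0 - γ δ‖` leaves the term
`‖γ'' h‖ ^ 2 / 6 * (δ * ε ^ 2)` in their difference, and `ε = Θ(δ)`, `σ = o(δ)` make the error
negligible against it.
-/

open scoped InnerProductSpace Topology Asymptotics

section Wasserstein

variable {X : Type*} [MeasurableSpace X]

/-- `π` is a coupling (transport plan) of `μ` and `ν`: its marginals are `μ` and `ν`. -/
structure IsCoupling (π : Measure (X × X)) (μ ν : Measure X) : Prop where
  map_fst : π.map Prod.fst = μ
  map_snd : π.map Prod.snd = ν

variable {π P : Measure (X × X)} {μ ν : Measure X} {f : X → ℝ}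

lemma isProbabilityMeasure_of_map_fst [IsProbabilityMeasure μ] (h : P.map Prod.fst = μ) :
    IsProbabilityMeasure P := by
  subst h
  exact Measure.isProbabilityMeasure_of_map Prod.fst

lemma IsCoupling.integrable_sub (hπ : IsCoupling π μ ν) (hμ : Integrable f μ)
    (hν : Integrable f ν) : Integrable (fun p : X × X => f p.2 - f p.1) π := by
  obtain ⟨rfl, rfl⟩ := hπ
  exact (hν.comp_measurable measurable_snd).sub (hμ.comp_measurable measurable_fst)

lemma IsCoupling.integral_sub (hπ : IsCoupling π μ ν) (hμ : Integrable f μ)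
    (hν : Integrable f ν) : ∫ p, (f p.2 - f p.1) ∂π = ∫ x, f x ∂ν - ∫ x, f x ∂μ := by
  obtain ⟨rfl, rfl⟩ := hπ
  refine (MeasureTheory.integral_sub (hν.comp_measurable measurable_snd)
    (hμ.comp_measurable measurable_fst)).trans ?_
  rw [integral_map measurable_snd.aemeasurable hν.aestronglyMeasurable,
    integral_map measurable_fst.aemeasurable hμ.aestronglyMeasurable]
  rfl

lemma isCoupling_prod [IsProbabilityMeasure μ] [IsProbabilityMeasure ν] :
    IsCoupling (μ.prod ν) μ ν :=
  ⟨by simp, by simp⟩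

lemma isCoupling_smul_add_prod_sub [IsProbabilityMeasure μ] [IsProbabilityMeasure ν] {l : ENNReal}
    (hP : P.map Prod.fst = μ) (hle : l • P.map Prod.snd ≤ ν) :
    IsCoupling (l • P + μ.prod (ν - l • P.map Prod.snd)) μ ν := by
  have := isProbabilityMeasure_of_map_fst hP
  have : IsFiniteMeasure (l • P.map Prod.snd) := isFiniteMeasure_of_le ν hle
  have : IsFiniteMeasure (ν - l • P.map Prod.snd) := isFiniteMeasure_of_le ν Measure.sub_le
  have hsplit : l • P.map Prod.snd + (ν - l • P.map Prod.snd) = ν := by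
    rw [add_comm, Measure.sub_add_cancel_of_le hle]
  have hmass : l + (ν - l • P.map Prod.snd) univ = 1 := by
    simpa [Measure.map_apply measurable_snd] using congrArg (fun m : Measure X => m univ) hsplit
  constructor
  · rw [Measure.map_add _ _ measurable_fst, Measure.map_smul, hP, Measure.map_fst_prod,
      ← add_smul, hmass, one_smul]
  · rw [Measure.map_add _ _ measurable_snd, Measure.map_smul, Measure.map_snd_prod, measure_univ,
      one_smul, hsplit]

variable [PseudoMetricSpace X]

lemma W1_le_integral_dist [IsProbabilityMeasure μ] (hπ : IsCoupling π μ ν) :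
    W1 μ ν ≤ ∫ p, dist p.1 p.2 ∂π := by
  refine csInf_le ⟨0, ?_⟩
    ⟨π, isProbabilityMeasure_of_map_fst hπ.map_fst, hπ.map_fst, hπ.map_snd, rfl⟩
  rintro _ ⟨_, -, -, -, rfl⟩
  exact integral_nonneg fun _ => dist_nonneg

variable [OpensMeasurableSpace X]

lemma integrable_of_lipschitzWith_one [IsFiniteMeasure μ] (hf : LipschitzWith 1 f) {x₀ : X}
    (hμ : Integrable (dist x₀) μ) : Integrable f μ := by
  refine ((integrable_const |f x₀|).add hμ).mono'
    hf.continuous.aestronglyMeasurable (.of_forall fun x => ?_)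
  have := hf.dist_le_mul x x₀
  rw [NNReal.coe_one, one_mul, dist_comm x, Real.dist_eq] at this
  rw [Real.norm_eq_abs, Pi.add_apply]
  linarith [abs_sub_abs_le_abs_sub (f x) (f x₀)]

variable [SecondCountableTopology X]

lemma IsCoupling.integrable_dist (hπ : IsCoupling π μ ν) (x₀ : X)
    (hμ : Integrable (dist x₀) μ) (hν : Integrable (dist x₀) ν) :
    Integrable (fun p : X × X => dist p.1 p.2) π := by
  obtain ⟨rfl, rfl⟩ := hπ
  refine ((hμ.comp_measurable measurable_fst).add (hν.comp_measurable measurable_snd)).mono'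
    (by fun_prop) (.of_forall fun p => ?_)
  rw [Real.norm_of_nonneg dist_nonneg]
  exact dist_triangle_left _ _ _

theorem integral_sub_integral_le_W1 [IsProbabilityMeasure μ] [IsProbabilityMeasure ν]
    (hf : LipschitzWith 1 f) {x₀ : X} (hμ : Integrable (dist x₀) μ)
    (hν : Integrable (dist x₀) ν) : ∫ x, f x ∂ν - ∫ x, f x ∂μ ≤ W1 μ ν := by
  refine le_csInf ⟨_, μ.prod ν, inferInstance, isCoupling_prod.map_fst, isCoupling_prod.map_snd,
    rfl⟩ ?_
  rintro _ ⟨π, -, hfst, hsnd, rfl⟩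
  have hπ : IsCoupling π μ ν := ⟨hfst, hsnd⟩
  have hfμ := integrable_of_lipschitzWith_one hf hμ
  have hfν := integrable_of_lipschitzWith_one hf hν
  rw [← hπ.integral_sub hfμ hfν]
  refine integral_mono (hπ.integrable_sub hfμ hfν) (hπ.integrable_dist x₀ hμ hν) fun p => ?_
  simpa [Real.dist_eq, dist_comm] using (le_abs_self _).trans (hf.dist_le_mul p.2 p.1)

variable {m : Measure (X × X)} [IsFiniteMeasure m] {g : X × X → ℝ} {b : ℝ}

lemma integrable_dist_of_ae_le (hg : Integrable g m) (h : ∀ᵐ p ∂m, dist p.1 p.2 ≤ g p + b) :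
    Integrable (fun p : X × X => dist p.1 p.2) m := by
  refine (hg.add (integrable_const b)).mono' (by fun_prop) ?_
  filter_upwards [h] with p hp
  rwa [Real.norm_of_nonneg dist_nonneg]

lemma integral_dist_le_of_ae_le (hg : Integrable g m) (h : ∀ᵐ p ∂m, dist p.1 p.2 ≤ g p + b) :
    ∫ p, dist p.1 p.2 ∂m ≤ ∫ p, g p ∂m + m.real univ * b := by
  have hgb : Integrable (fun p => g p + b) m := hg.add (integrable_const b)
  have hle := integral_mono_ae (integrable_dist_of_ae_le hg h) hgb h
  rwa [integral_add hg (integrable_const b), integral_const, smul_eq_mul] at hle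

theorem W1_le_of_partial_transport [IsProbabilityMeasure μ] [IsProbabilityMeasure ν]
    (hμ : Integrable f μ) (hν : Integrable f ν) {l b₁ b₂ : ℝ} (hl : 0 ≤ l)
    (hP : P.map Prod.fst = μ) (hle : ENNReal.ofReal l • P.map Prod.snd ≤ ν)
    (h₁ : ∀ᵐ p ∂P, dist p.1 p.2 ≤ f p.2 - f p.1 + b₁)
    (h₂ : ∀ᵐ p ∂μ.prod ν, dist p.1 p.2 ≤ f p.2 - f p.1 + b₂) :
    W1 μ ν ≤ ∫ x, f x ∂ν - ∫ x, f x ∂μ + (l * b₁ + (1 - l) * b₂) := by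
  set moved := ENNReal.ofReal l • P with hmoved
  set rest := μ.prod (ν - ENNReal.ofReal l • P.map Prod.snd)
  have hπ : IsCoupling (moved + rest) μ ν := isCoupling_smul_add_prod_sub hP hle
  have := isProbabilityMeasure_of_map_fst hP
  have hprob := isProbabilityMeasure_of_map_fst hπ.map_fst
  have : IsFiniteMeasure moved := isFiniteMeasure_of_le (moved + rest) (Measure.le_add_right le_rfl)
  have : IsFiniteMeasure rest := isFiniteMeasure_of_le (moved + rest) (Measure.le_add_left le_rfl)
  have hmoved_mass : moved.real univ = l := by simp [hmoved, measureReal_def, hl]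
  have hrest_mass : rest.real univ = 1 - l := by
    have htotal : (moved + rest).real univ = 1 := probReal_univ
    rw [measureReal_add_apply, hmoved_mass] at htotal
    linarith
  have hint := hπ.integrable_sub hμ hν
  obtain ⟨hint_moved, hint_rest⟩ := integrable_add_measure.1 hint
  have h₁' : ∀ᵐ p ∂moved, dist p.1 p.2 ≤ f p.2 - f p.1 + b₁ := Measure.ae_smul_measure h₁ _
  have h₂' : ∀ᵐ p ∂rest, dist p.1 p.2 ≤ f p.2 - f p.1 + b₂ := by
    refine Measure.AbsolutelyContinuous.ae_le ?_ h₂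
    exact Measure.AbsolutelyContinuous.rfl.prod (Measure.absolutelyContinuous_of_le Measure.sub_le)
  calc W1 μ ν ≤ ∫ p, dist p.1 p.2 ∂(moved + rest) := W1_le_integral_dist hπ
    _ = ∫ p, dist p.1 p.2 ∂moved + ∫ p, dist p.1 p.2 ∂rest :=
      integral_add_measure (integrable_dist_of_ae_le hint_moved h₁')
        (integrable_dist_of_ae_le hint_rest h₂')
    _ ≤ ∫ p, (f p.2 - f p.1) ∂moved + l * b₁
        + (∫ p, (f p.2 - f p.1) ∂rest + (1 - l) * b₂) := by
      rw [← hrest_mass, ← hmoved_mass]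
      exact add_le_add (integral_dist_le_of_ae_le hint_moved h₁')
        (integral_dist_le_of_ae_le hint_rest h₂')
    _ = ∫ p, (f p.2 - f p.1) ∂(moved + rest) + (l * b₁ + (1 - l) * b₂) := by
      rw [integral_add_measure hint_moved hint_rest]
      ring
    _ = ∫ x, f x ∂ν - ∫ x, f x ∂μ + (l * b₁ + (1 - l) * b₂) := by
      rw [hπ.integral_sub hμ hν]

theorem W1_map_le_of_partial_transport {Z : Type*} [MeasurableSpace Z] {m₀ m₁ : Measure Z}
    [IsProbabilityMeasure m₀] [IsProbabilityMeasure m₁] {φ : Z → X} {τ : Z → Z} {f : X → ℝ}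
    (hφ : Measurable φ) (hτ : Measurable τ) (hf : Measurable f)
    (h₀ : Integrable (fun z => f (φ z)) m₀) (h₁ : Integrable (fun z => f (φ z)) m₁)
    {l b₁ b₂ : ℝ} (hl : 0 ≤ l) (hle : ENNReal.ofReal l • m₀.map τ ≤ m₁)
    (hτb : ∀ᵐ z ∂m₀, dist (φ z) (φ (τ z)) ≤ f (φ (τ z)) - f (φ z) + b₁)
    (hb : ∀ᵐ z ∂m₀.prod m₁, dist (φ z.1) (φ z.2) ≤ f (φ z.2) - f (φ z.1) + b₂) :
    W1 (m₀.map φ) (m₁.map φ) ≤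
      ∫ z, f (φ z) ∂m₁ - ∫ z, f (φ z) ∂m₀ + (l * b₁ + (1 - l) * b₂) := by
  have := Measure.isProbabilityMeasure_map (μ := m₀) hφ.aemeasurable
  have := Measure.isProbabilityMeasure_map (μ := m₁) hφ.aemeasurable
  have hpair : Measurable fun z => (φ z, φ (τ z)) := hφ.prodMk (hφ.comp hτ)
  have hmeas (b : ℝ) : MeasurableSet {p : X × X | dist p.1 p.2 ≤ f p.2 - f p.1 + b} :=
    measurableSet_le (by fun_prop) (by fun_prop)
  rw [← integral_map hφ.aemeasurable hf.aestronglyMeasurable,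
    ← integral_map hφ.aemeasurable hf.aestronglyMeasurable]
  refine W1_le_of_partial_transport (P := m₀.map fun z => (φ z, φ (τ z)))
    ((integrable_map_measure hf.aestronglyMeasurable hφ.aemeasurable).2 h₀)
    ((integrable_map_measure hf.aestronglyMeasurable hφ.aemeasurable).2 h₁) hl
    (Measure.map_map measurable_fst hpair) ?_
    ((ae_map_iff hpair.aemeasurable (hmeas b₁)).2 hτb) ?_
  · rw [Measure.map_map measurable_snd hpair]
    calc ENNReal.ofReal l • m₀.map (φ ∘ τ) = (ENNReal.ofReal l • m₀.map τ).map φ := by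
          rw [Measure.map_smul, Measure.map_map hφ hτ]
      _ ≤ m₁.map φ := Measure.map_mono hle hφ
  · rw [Measure.map_prod_map _ _ hφ hφ]
    exact (ae_map_iff (hφ.prodMap hφ).aemeasurable (hmeas b₂)).2 hb

end Wasserstein

lemma norm_sub_inner_le_sq_norm_sub {E : Type*} [NormedAddCommGroup E] [InnerProductSpace ℝ E]
    {e : E} (he : ‖e‖ = 1) (v : E) {r : ℝ} (hr : 0 < r) :
    ‖v‖ - ⟪v, e⟫_ℝ ≤ ‖v - r • e‖ ^ 2 / (2 * r) := by
  rw [le_div_iff₀ (by positivity), norm_sub_sq_real, real_inner_smul_right, norm_smul, he,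
    Real.norm_of_nonneg hr.le]
  nlinarith [sq_nonneg (‖v‖ - r)]

lemma lipschitzWith_one_inner_right {E : Type*} [NormedAddCommGroup E] [InnerProductSpace ℝ E]
    {e : E} (he : ‖e‖ = 1) : LipschitzWith 1 fun x => ⟪x, e⟫_ℝ := by
  refine LipschitzWith.of_dist_le_mul fun x y => ?_
  rw [Real.dist_eq, ← inner_sub_left, NNReal.coe_one, one_mul, dist_eq_norm]
  simpa [he] using abs_real_inner_le_norm (x - y) e

lemma dist_le_inner_sub_inner_add {E : Type*} [NormedAddCommGroup E]
    [InnerProductSpace ℝ E] {e : E} (he : ‖e‖ = 1) (x y : E) :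
    dist x y ≤ ⟪y, e⟫_ℝ - ⟪x, e⟫_ℝ + 2 * dist x y := by
  have := (lipschitzWith_one_inner_right he).dist_le_mul x y
  rw [NNReal.coe_one, one_mul, Real.dist_eq] at this
  linarith [le_abs_self (⟪x, e⟫_ℝ - ⟪y, e⟫_ℝ)]

section ChangeOfVariables

variable {E : Type*} [NormedAddCommGroup E] [InnerProductSpace ℝ E]

/-- The Cartesian coordinates of the plane `E` in an orthonormal basis, valued in `ℝ × ℝ`, where
determinants and product measures are explicit. -/
noncomputable def planeCoords (b : OrthonormalBasis (Fin 2) ℝ E) : E ≃L[ℝ] ℝ × ℝ :=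
  b.repr.toContinuousLinearEquiv.trans
    ((EuclideanSpace.equiv (Fin 2) ℝ).trans (ContinuousLinearEquiv.finTwoArrow ℝ ℝ))

lemma planeCoords_apply (b : OrthonormalBasis (Fin 2) ℝ E) (x : E) :
    planeCoords b x = (b.repr x 0, b.repr x 1) := rfl

lemma det_fst_smulRight_add_snd_smulRight (a b : ℝ × ℝ) :
    ((ContinuousLinearMap.fst ℝ ℝ ℝ).smulRight a +
      (ContinuousLinearMap.snd ℝ ℝ ℝ).smulRight b).det = a.1 * b.2 - b.1 * a.2 := by
  have hmatrix : (ContinuousLinearMap.fst ℝ ℝ ℝ).smulRight a +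
      (ContinuousLinearMap.snd ℝ ℝ ℝ).smulRight b =
      ((Matrix.toLin (.finTwoProd ℝ) (.finTwoProd ℝ)
        !![a.1, b.1; a.2, b.2]).toContinuousLinearMap) := by
    rw [Matrix.toLin_finTwoProd_toContinuousLinearMap]
    ext <;> simp
  rw [hmatrix, LinearMap.det_toContinuousLinearMap, LinearMap.det_toLin, Matrix.det_fin_two_of]

variable [Fact (Module.finrank ℝ E = 2)]

lemma abs_areaForm_eq_abs_det_planeCoords (o : Orientation ℝ E (Fin 2))
    (b : OrthonormalBasis (Fin 2) ℝ E) (u v : E) :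
    |o.areaForm u v| = |((ContinuousLinearMap.fst ℝ ℝ ℝ).smulRight (planeCoords b u) +
      (ContinuousLinearMap.snd ℝ ℝ ℝ).smulRight (planeCoords b v)).det| := by
  rw [o.areaForm_to_volumeForm, o.volumeForm_robust' b, det_fst_smulRight_add_snd_smulRight,
    Module.Basis.det_apply, Matrix.det_fin_two]
  simp [planeCoords_apply, Module.Basis.toMatrix_apply]

variable [MeasurableSpace E] [BorelSpace E]

attribute [local instance] FiniteDimensional.of_fact_finrank_eq_two

lemma measurePreserving_planeCoords (b : OrthonormalBasis (Fin 2) ℝ E) :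
    MeasurePreserving (planeCoords b) :=
  ((volume_preserving_finTwoArrow ℝ).comp
    (EuclideanSpace.volume_preserving_symm_measurableEquiv_toLp (Fin 2))).comp
    b.measurePreserving_repr

theorem map_withDensity_abs_areaForm (o : Orientation ℝ E (Fin 2)) {φ : ℝ × ℝ → E}
    {u v : ℝ × ℝ → E} {B : Set (ℝ × ℝ)} (hB : MeasurableSet B) (hφ : Measurable φ)
    (hφ' : ∀ p ∈ B, HasFDerivWithinAt φ ((ContinuousLinearMap.fst ℝ ℝ ℝ).smulRight (u p) +
      (ContinuousLinearMap.snd ℝ ℝ ℝ).smulRight (v p)) B p) (hinj : InjOn φ B) :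
    ((volume.restrict B).withDensity fun p => ENNReal.ofReal |o.areaForm (u p) (v p)|).map φ =
      volume.restrict (φ '' B) := by
  have b : OrthonormalBasis (Fin 2) ℝ E :=
    (stdOrthonormalBasis ℝ E).reindex (finCongr (Fact.out : Module.finrank ℝ E = 2))
  have hpres := measurePreserving_planeCoords b
  have hemb : MeasurableEmbedding (planeCoords b) :=
    (planeCoords b).toHomeomorph.measurableEmbedding
  have hderiv : ∀ p ∈ B, HasFDerivWithinAt (planeCoords b ∘ φ)
      ((ContinuousLinearMap.fst ℝ ℝ ℝ).smulRight (planeCoords b (u p)) +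
        (ContinuousLinearMap.snd ℝ ℝ ℝ).smulRight (planeCoords b (v p))) B p := fun p hp => by
    refine ((planeCoords b).hasFDerivAt.comp_hasFDerivWithinAt p (hφ' p hp)).congr_fderiv ?_
    ext <;> simp
  have hcoords := map_withDensity_abs_det_fderiv_eq_addHaar volume hB.nullMeasurableSet hderiv
    ((planeCoords b).injective.comp_injOn hinj)
  have hrestrict := (hpres.restrict_preimage_emb hemb (planeCoords b '' (φ '' B))).map_eq
  rw [(planeCoords b).injective.preimage_image, ← image_comp, ← hcoords,
    ← Measure.map_map hpres.measurable hφ] at hrestrict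
  simp_rw [abs_areaForm_eq_abs_det_planeCoords o b]
  exact (hemb.map_injective hrestrict).symm

end ChangeOfVariables

section SymmetricTaylor

variable {F : Type*} [NormedAddCommGroup F] [NormedSpace ℝ F]

lemma norm_le_mul_pow_succ_of_hasDerivAt {f f' : ℝ → F} {C w : ℝ} {n : ℕ} (hC : 0 ≤ C)
    (hw : 0 ≤ w) (hf : ∀ x ∈ Icc 0 w, HasDerivAt f (f' x) x) (hf₀ : f 0 = 0)
    (hf' : ∀ x ∈ Icc 0 w, ‖f' x‖ ≤ C * x ^ n) : ‖f w‖ ≤ C * w ^ (n + 1) := by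
  have hmono : ∀ x ∈ Icc 0 w, ‖f' x‖ ≤ C * w ^ n := fun x hx =>
    (hf' x hx).trans (mul_le_mul_of_nonneg_left (pow_le_pow_left₀ hx.1 hx.2 n) hC)
  have hbound := (convex_Icc 0 w).norm_image_sub_le_of_norm_hasDerivWithin_le
    (fun x hx => (hf x hx).hasDerivWithinAt) hmono (left_mem_Icc.2 hw) (right_mem_Icc.2 hw)
  simpa [hf₀, abs_of_nonneg hw, pow_succ, mul_assoc] using hbound

variable {f : ℝ → F} {h w K : ℝ}

lemma hasDerivAt_add_sub_sub (hf : Differentiable ℝ f) (x : ℝ) :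
    HasDerivAt (fun w => f (h + w) - f (h - w)) (deriv f (h + x) + deriv f (h - x)) x := by
  simpa using ((hf _).hasDerivAt.comp_const_add h x).fun_sub
    ((hf _).hasDerivAt.comp_const_sub h x)

lemma hasDerivAt_add_add_sub (hf : Differentiable ℝ f) (x : ℝ) :
    HasDerivAt (fun w => f (h + w) + f (h - w)) (deriv f (h + x) - deriv f (h - x)) x := by
  simpa [sub_eq_add_neg] using ((hf _).hasDerivAt.comp_const_add h x).fun_add
    ((hf _).hasDerivAt.comp_const_sub h x)

lemma norm_add_sub_sub_le (hf : ContDiff ℝ 1 f) (hw : 0 ≤ w)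
    (hK : ∀ s ∈ Icc (h - w) (h + w), ‖iteratedDeriv 1 f s‖ ≤ K) :
    ‖f (h + w) - f (h - w)‖ ≤ 2 * K * w := by
  have hbound : ∀ x ∈ Icc 0 w, ‖deriv f (h + x) + deriv f (h - x)‖ ≤ 2 * K * x ^ 0 := by
    intro x hx
    have h₁ := hK (h + x) ⟨by linarith [hx.1], by linarith [hx.2]⟩
    have h₂ := hK (h - x) ⟨by linarith [hx.2], by linarith [hx.1]⟩
    rw [iteratedDeriv_one] at h₁ h₂
    linarith [norm_add_le (deriv f (h + x)) (deriv f (h - x))]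
  have hK₀ : 0 ≤ K := (norm_nonneg _).trans (hK h ⟨by linarith, by linarith⟩)
  simpa using norm_le_mul_pow_succ_of_hasDerivAt (by positivity) hw
    (fun x _ => hasDerivAt_add_sub_sub (hf.differentiable one_ne_zero) x) (by simp) hbound

lemma Icc_sub_add_mono {x : ℝ} (hx : x ≤ w) : Icc (h - x) (h + x) ⊆ Icc (h - w) (h + w) :=
  Icc_subset_Icc (by linarith) (by linarith)

lemma norm_add_add_sub_sub_le (hf : ContDiff ℝ 2 f) (hw : 0 ≤ w)
    (hK : ∀ s ∈ Icc (h - w) (h + w), ‖iteratedDeriv 2 f s‖ ≤ K) :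
    ‖f (h + w) + f (h - w) - (2 : ℝ) • f h‖ ≤ 2 * K * w ^ 2 := by
  have hK₀ : 0 ≤ K := (norm_nonneg _).trans (hK h ⟨by linarith, by linarith⟩)
  rw [iteratedDeriv_succ'] at hK
  refine norm_le_mul_pow_succ_of_hasDerivAt (by positivity) hw
    (fun x _ => (hasDerivAt_add_add_sub (hf.differentiable two_ne_zero) x).sub_const _)
    (by simp [two_smul]) fun x hx => ?_
  rw [pow_one]
  exact norm_add_sub_sub_le hf.deriv' hx.1 fun s hs => hK s (Icc_sub_add_mono hx.2 hs)

lemma norm_add_sub_sub_sub_le (hf : ContDiff ℝ 3 f) (hw : 0 ≤ w)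
    (hK : ∀ s ∈ Icc (h - w) (h + w), ‖iteratedDeriv 3 f s‖ ≤ K) :
    ‖f (h + w) - f (h - w) - (2 * w) • deriv f h‖ ≤ 2 * K * w ^ 3 := by
  have hK₀ : 0 ≤ K := (norm_nonneg _).trans (hK h ⟨by linarith, by linarith⟩)
  rw [iteratedDeriv_succ'] at hK
  refine norm_le_mul_pow_succ_of_hasDerivAt (by positivity) hw
    (fun x _ => (hasDerivAt_add_sub_sub (hf.differentiable three_ne_zero) x).sub
      (((hasDerivAt_id x).const_mul 2).smul_const _)) (by simp) fun x hx => ?_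
  simpa using norm_add_add_sub_sub_le hf.deriv' hx.1 fun s hs => hK s (Icc_sub_add_mono hx.2 hs)

lemma norm_add_add_sub_sub_sub_le (hf : ContDiff ℝ 4 f) (hw : 0 ≤ w)
    (hK : ∀ s ∈ Icc (h - w) (h + w), ‖iteratedDeriv 4 f s‖ ≤ K) :
    ‖f (h + w) + f (h - w) - (2 : ℝ) • f h - w ^ 2 • iteratedDeriv 2 f h‖ ≤ 2 * K * w ^ 4 := by
  have hK₀ : 0 ≤ K := (norm_nonneg _).trans (hK h ⟨by linarith, by linarith⟩)
  rw [iteratedDeriv_succ'] at hK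
  refine norm_le_mul_pow_succ_of_hasDerivAt (by positivity) hw
    (fun x _ => ((hasDerivAt_add_add_sub (hf.differentiable four_ne_zero) x).sub_const _).sub
      ((hasDerivAt_pow 2 x).smul_const _)) (by simp [two_smul]) fun x hx => ?_
  simpa [iteratedDeriv_succ] using
    norm_add_sub_sub_sub_le hf.deriv' hx.1 fun s hs => hK s (Icc_sub_add_mono hx.2 hs)

lemma norm_add_sub_sub_sub_sub_le (hf : ContDiff ℝ 5 f) (hw : 0 ≤ w)
    (hK : ∀ s ∈ Icc (h - w) (h + w), ‖iteratedDeriv 5 f s‖ ≤ K) :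
    ‖f (h + w) - f (h - w) - (2 * w) • deriv f h - (w ^ 3 / 3) • iteratedDeriv 3 f h‖ ≤
      2 * K * w ^ 5 := by
  have hK₀ : 0 ≤ K := (norm_nonneg _).trans (hK h ⟨by linarith, by linarith⟩)
  rw [iteratedDeriv_succ'] at hK
  refine norm_le_mul_pow_succ_of_hasDerivAt (by positivity) hw
    (fun x _ => ((hasDerivAt_add_sub_sub (hf.differentiable (by norm_num)) x).sub
      (((hasDerivAt_id x).const_mul 2).smul_const _)).sub
      (((hasDerivAt_pow 3 x).div_const 3).smul_const _)) (by simp) fun x hx => ?_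
  rw [iteratedDeriv_succ']
  simpa using norm_add_add_sub_sub_sub_le hf.deriv' hx.1 fun s hs => hK s (Icc_sub_add_mono hx.2 hs)

lemma exists_forall_norm_iteratedDeriv_le {n : ℕ} (hf : ContDiff ℝ n f) (a b : ℝ) :
    ∃ K, ∀ i ≤ n, ∀ s ∈ Icc a b, ‖iteratedDeriv i f s‖ ≤ K := by
  have hcont : ∀ i ≤ n, Continuous fun s => ‖iteratedDeriv i f s‖ := fun i hi =>
    (hf.continuous_iteratedDeriv i (by exact_mod_cast hi)).norm
  choose! C hC using fun i (hi : i ≤ n) => isCompact_Icc.bddAbove_image (hcont i hi).continuousOn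
  refine ⟨∑ i ∈ Finset.range (n + 1), |C i|, fun i hi s hs => ?_⟩
  calc ‖iteratedDeriv i f s‖ ≤ C i := hC i hi (mem_image_of_mem _ hs)
    _ ≤ |C i| := le_abs_self _
    _ ≤ _ := Finset.single_le_sum (f := fun i => |C i|) (fun _ _ => abs_nonneg _)
      (Finset.mem_range.2 (by omega))

end SymmetricTaylor

section UnitSpeed

variable {F : Type*} [NormedAddCommGroup F] [InnerProductSpace ℝ F] {v : ℝ → F}

lemma inner_deriv_eq_zero_of_norm_eq_one (hv : Differentiable ℝ v) (hunit : ∀ s, ‖v s‖ = 1)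
    (s : ℝ) : ⟪v s, deriv v s⟫_ℝ = 0 := by
  have hderiv := (hv s).hasDerivAt.norm_sq
  simp_rw [hunit] at hderiv
  linarith [hderiv.unique (hasDerivAt_const s _)]

lemma inner_deriv_deriv_of_norm_eq_one (hv : ContDiff ℝ 2 v) (hunit : ∀ s, ‖v s‖ = 1)
    (s : ℝ) : ⟪deriv (deriv v) s, v s⟫_ℝ = -‖deriv v s‖ ^ 2 := by
  have hdiff : Differentiable ℝ v := hv.differentiable two_ne_zero
  have hderiv := ((hv.differentiable_deriv_two s).hasDerivAt.inner ℝ (hdiff s).hasDerivAt)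
  have hzero : (fun s => ⟪deriv v s, v s⟫_ℝ) = fun _ => 0 := funext fun s => by
    rw [real_inner_comm, inner_deriv_eq_zero_of_norm_eq_one hdiff hunit]
  rw [hzero] at hderiv
  have hsum := hderiv.unique (hasDerivAt_const s _)
  rw [real_inner_self_eq_norm_sq] at hsum
  linarith

end UnitSpeed

lemma exists_mem_nhds_injOn_of_injective {V W : Type*} [NormedAddCommGroup V] [NormedSpace ℝ V]
    [FiniteDimensional ℝ V] [NormedAddCommGroup W] [NormedSpace ℝ W] {f : V → W} {f' : V →L[ℝ] W}
    {a : V} (hf : HasStrictFDerivAt f f' a) (hf' : Function.Injective f') :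
    ∃ U ∈ 𝓝 a, InjOn f U := by
  obtain ⟨c, hc, hanti⟩ := (f' : V →ₗ[ℝ] W).exists_antilipschitzWith (LinearMap.ker_eq_bot.2 hf')
  have hclose := hf.isLittleO.def (c := (2 * c : ℝ)⁻¹) (by positivity)
  rw [nhds_prod_eq] at hclose
  obtain ⟨U, hU, hUf⟩ := eventually_prod_self_iff'.1 hclose
  refine ⟨U, hU, fun x hx y hy hxy => ?_⟩
  have hsmall : ‖f' (x - y)‖ ≤ (2 * c : ℝ)⁻¹ * ‖x - y‖ := by
    simpa [hxy, norm_sub_rev] using hUf x hx y hy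
  have hlarge : ‖x - y‖ ≤ c * ‖f' (x - y)‖ := by
    simpa [dist_eq_norm] using hanti.le_mul_dist (x - y) 0
  have hhalf : c * ((2 * c : ℝ)⁻¹ * ‖x - y‖) = ‖x - y‖ / 2 := by field_simp
  have : ‖x - y‖ ≤ 0 := by nlinarith [hlarge.trans (mul_le_mul_of_nonneg_left hsmall c.2)]
  exact sub_eq_zero.1 (norm_le_zero_iff.1 this)

lemma hasFDerivAt_comp_fst {W : Type*} [NormedAddCommGroup W] [NormedSpace ℝ W] {g : ℝ → W}
    {g' : W} {p : ℝ × ℝ} (hg : HasDerivAt g g' p.1) :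
    HasFDerivAt (fun q : ℝ × ℝ => g q.1) ((ContinuousLinearMap.fst ℝ ℝ ℝ).smulRight g') p :=
  (hg.hasFDerivAt.comp p hasFDerivAt_fst).congr_fderiv (by ext <;> simp)

section FermiChart

variable {E : Type*} [NormedAddCommGroup E] [InnerProductSpace ℝ E]
  [Fact (Module.finrank ℝ E = 2)] (o : Orientation ℝ E (Fin 2)) (γ : ℝ → E)

attribute [local instance] FiniteDimensional.of_fact_finrank_eq_two

local notation "J" => o.rightAngleRotation

/-- The signed curvature of a unit-speed plane curve, positive where the curve turns towards its
left normal. -/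
noncomputable def signedCurvature (s : ℝ) : ℝ := ⟪J (deriv γ s), deriv (deriv γ) s⟫_ℝ

/-- The Fermi chart along `γ`, built with the left normal `J (deriv γ s)` rather than with the
principal normal, so that it is smooth also where the curvature vanishes. -/
noncomputable def fermiChart (p : ℝ × ℝ) : E := γ p.1 + p.2 • J (deriv γ p.1)

/-- The rectangle of Fermi coordinates describing the tube of half-length `ε` and half-width `σ`
around the point of arc length `t`. -/
def box (t σ ε : ℝ) : Set (ℝ × ℝ) := Ioo (t - ε) (t + ε) ×ˢ Ioo (-σ) σ

/-- The uniform probability measure on the tube of half-length `ε` and half-width `σ` around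
`γ t`. -/
noncomputable def testMeasure [MeasurableSpace E] [BorelSpace E] (t σ ε : ℝ) : Measure E :=
  normRestrict (fermiChart o γ '' box t σ ε)

lemma eq_inner_smul_rightAngleRotation_of_inner_eq_zero {e x : E} (he : ‖e‖ = 1)
    (hx : ⟪e, x⟫_ℝ = 0) : x = ⟪J e, x⟫_ℝ • J e := by
  refine ext_inner_right ℝ fun y => ?_
  have := o.inner_mul_inner_add_areaForm_mul_areaForm e x y
  rw [hx, zero_mul, zero_add, he, one_pow, one_mul] at this
  simp [inner_smul_left, ← this]

variable {γ} {K s t : ℝ}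

lemma deriv_deriv_eq_signedCurvature_smul (hγ : ContDiff ℝ 2 γ) (hunit : ∀ s, ‖deriv γ s‖ = 1)
    (s : ℝ) : deriv (deriv γ) s = signedCurvature o γ s • J (deriv γ s) :=
  eq_inner_smul_rightAngleRotation_of_inner_eq_zero o (hunit s)
    (inner_deriv_eq_zero_of_norm_eq_one hγ.differentiable_deriv_two hunit s)

lemma rightAngleRotation_deriv_deriv (hγ : ContDiff ℝ 2 γ) (hunit : ∀ s, ‖deriv γ s‖ = 1)
    (s : ℝ) : J (deriv (deriv γ) s) = -(signedCurvature o γ s • deriv γ s) := by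
  rw [deriv_deriv_eq_signedCurvature_smul o hγ hunit s, map_smul,
    o.rightAngleRotation_rightAngleRotation, smul_neg]

lemma abs_signedCurvature (hγ : ContDiff ℝ 2 γ) (hunit : ∀ s, ‖deriv γ s‖ = 1) (s : ℝ) :
    |signedCurvature o γ s| = ‖deriv (deriv γ) s‖ := by
  rw [deriv_deriv_eq_signedCurvature_smul o hγ hunit s, norm_smul, LinearIsometryEquiv.norm_map,
    hunit, mul_one, Real.norm_eq_abs]

lemma hasDerivAt_signedCurvature (hγ : ContDiff ℝ 3 γ) (s : ℝ) :
    HasDerivAt (signedCurvature o γ) ⟪J (deriv γ s), iteratedDeriv 3 γ s⟫_ℝ s := by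
  have hγ'' : HasDerivAt (deriv γ) (deriv (deriv γ) s) s :=
    (hγ.deriv'.differentiable two_ne_zero s).hasDerivAt
  have hγ''' : HasDerivAt (deriv (deriv γ)) (iteratedDeriv 3 γ s) s := by
    simpa [iteratedDeriv_succ] using (hγ.deriv'.differentiable_deriv_two s).hasDerivAt
  change HasDerivAt (fun t => ⟪J (deriv γ t), deriv (deriv γ) t⟫_ℝ) _ s
  simpa using
    (o.rightAngleRotation.toContinuousLinearEquiv.hasFDerivAt.comp_hasDerivAt s hγ'').inner ℝ hγ'''

lemma abs_signedCurvature_sub_le (hγ : ContDiff ℝ 3 γ) (hunit : ∀ s, ‖deriv γ s‖ = 1)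
    {S : Set ℝ} (hS : Convex ℝ S) (hK : ∀ s ∈ S, ‖iteratedDeriv 3 γ s‖ ≤ K) (hs : s ∈ S)
    (ht : t ∈ S) : |signedCurvature o γ s - signedCurvature o γ t| ≤ K * |s - t| := by
  refine hS.norm_image_sub_le_of_norm_hasDerivWithin_le
    (fun x _ => (hasDerivAt_signedCurvature o hγ x).hasDerivWithinAt) (fun x hx => ?_) ht hs
  refine (norm_inner_le_norm _ _).trans ?_
  rw [LinearIsometryEquiv.norm_map, hunit, one_mul]
  exact hK x hx

lemma hasFDerivAt_fermiChart (hγ : ContDiff ℝ 2 γ) (hunit : ∀ s, ‖deriv γ s‖ = 1) (p : ℝ × ℝ) :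
    HasFDerivAt (fermiChart o γ)
      ((ContinuousLinearMap.fst ℝ ℝ ℝ).smulRight
          ((1 - signedCurvature o γ p.1 * p.2) • deriv γ p.1) +
        (ContinuousLinearMap.snd ℝ ℝ ℝ).smulRight (J (deriv γ p.1))) p := by
  have hγ' : HasDerivAt γ (deriv γ p.1) p.1 := (hγ.differentiable two_ne_zero _).hasDerivAt
  have hγ'' : HasDerivAt (deriv γ) (deriv (deriv γ) p.1) p.1 :=
    (hγ.differentiable_deriv_two _).hasDerivAt
  have hnormal : HasDerivAt (fun s => J (deriv γ s)) (J (deriv (deriv γ) p.1)) p.1 :=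
    o.rightAngleRotation.toContinuousLinearEquiv.hasFDerivAt.comp_hasDerivAt p.1 hγ''
  refine ((hasFDerivAt_comp_fst hγ').add
    (hasFDerivAt_snd.smul (hasFDerivAt_comp_fst hnormal))).congr_fderiv ?_
  ext <;> simp [rightAngleRotation_deriv_deriv o hγ hunit, smul_smul, mul_comm, sub_eq_add_neg,
    add_smul]

lemma contDiff_fermiChart (hγ : ContDiff ℝ 2 γ) : ContDiff ℝ 1 (fermiChart o γ) :=
  ((hγ.of_le one_le_two).comp contDiff_fst).add
    (contDiff_snd.smul (o.rightAngleRotation.contDiff.comp (hγ.deriv'.comp contDiff_fst)))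

lemma exists_mem_nhds_injOn_fermiChart (hγ : ContDiff ℝ 2 γ) (hunit : ∀ s, ‖deriv γ s‖ = 1)
    (t : ℝ) : ∃ U ∈ 𝓝 (t, (0 : ℝ)), InjOn (fermiChart o γ) U := by
  refine exists_mem_nhds_injOn_of_injective
    ((contDiff_fermiChart o hγ).contDiffAt.hasStrictFDerivAt'
      (hasFDerivAt_fermiChart o hγ hunit _) one_ne_zero) ?_
  refine (injective_iff_map_eq_zero _).2 fun p hp => ?_
  have hp' : p.1 • deriv γ t + p.2 • J (deriv γ t) = 0 := by simpa using hp
  have h₁ : p.1 = 0 := by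
    simpa [inner_add_left, real_inner_smul_left, hunit] using
      congrArg (fun v => ⟪v, deriv γ t⟫_ℝ) hp'
  have h₂ : p.2 = 0 := by
    simpa [h₁, ← norm_eq_zero (a := deriv γ t), hunit] using hp'
  exact Prod.ext h₁ h₂

end FermiChart

section BoxMeasure

/-- The normalized Lebesgue measure of a tube around a curve of signed curvature `k`, read in Fermi
coordinates: the density is the Jacobian of the chart, and `4 * σ * ε` is its total mass. -/
noncomputable def boxMeasure (k : ℝ → ℝ) (t σ ε : ℝ) : Measure (ℝ × ℝ) :=
  (ENNReal.ofReal (4 * σ * ε))⁻¹ •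
    (volume.restrict (box t σ ε)).withDensity fun p => ENNReal.ofReal (1 - k p.1 * p.2)

lemma measurableSet_box (t σ ε : ℝ) : MeasurableSet (box t σ ε) :=
  measurableSet_Ioo.prod measurableSet_Ioo

variable {k : ℝ → ℝ} {t σ ε : ℝ}

lemma ae_boxMeasure_mem (k : ℝ → ℝ) (t σ ε : ℝ) : ∀ᵐ p ∂boxMeasure k t σ ε, p ∈ box t σ ε :=
  Measure.ae_smul_measure
    ((withDensity_absolutelyContinuous _ _).ae_le (ae_restrict_mem (measurableSet_box t σ ε))) _

lemma preimage_reflect_box (t σ ε r : ℝ) :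
    (fun p : ℝ × ℝ => (r - p.1, p.2)) ⁻¹' box (r - t) σ ε = box t σ ε := by
  ext p
  simp only [box, mem_preimage, mem_prod, mem_Ioo]
  refine and_congr_left fun _ => ⟨?_, ?_⟩ <;> rintro ⟨h₁, h₂⟩ <;> constructor <;> linarith

lemma map_reflect_boxMeasure (k : ℝ → ℝ) (t σ ε r : ℝ) :
    (boxMeasure k t σ ε).map (fun p => (r - p.1, p.2)) =
      boxMeasure (fun s => k (r - s)) (r - t) σ ε := by
  have hmp : MeasurePreserving (fun p : ℝ × ℝ => (r - p.1, p.2)) := by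
    rw [Measure.volume_eq_prod]
    exact (Measure.measurePreserving_sub_left volume r).prod (MeasurePreserving.id volume)
  have hemb : MeasurableEmbedding fun p : ℝ × ℝ => (r - p.1, p.2) :=
    ((MeasurableEquiv.subLeft r).prodCongr (MeasurableEquiv.refl ℝ)).measurableEmbedding
  rw [boxMeasure, Measure.map_smul, boxMeasure]
  congr 1
  ext A hA
  rw [Measure.map_apply hmp.measurable hA, withDensity_apply _ (hmp.measurable hA),
    withDensity_apply _ hA, Measure.restrict_restrict (hmp.measurable hA),
    Measure.restrict_restrict hA, ← preimage_reflect_box t σ ε r, ← preimage_inter,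
    ← hmp.setLIntegral_comp_preimage_emb hemb fun p => ENNReal.ofReal (1 - k (r - p.1) * p.2)]
  simp only [sub_sub_cancel]

lemma smul_boxMeasure_le {k₁ k₂ : ℝ → ℝ} {l : ℝ} (hl : 0 ≤ l)
    (hk : ∀ p ∈ box t σ ε, l * (1 - k₁ p.1 * p.2) ≤ 1 - k₂ p.1 * p.2) :
    ENNReal.ofReal l • boxMeasure k₁ t σ ε ≤ boxMeasure k₂ t σ ε := by
  rw [boxMeasure, smul_comm, boxMeasure, ← withDensity_smul' _ _ ENNReal.ofReal_ne_top]
  gcongr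
  refine withDensity_mono ((ae_restrict_mem (measurableSet_box t σ ε)).mono fun p hp => ?_)
  rw [Pi.smul_apply, smul_eq_mul, ← ENNReal.ofReal_mul hl]
  exact ENNReal.ofReal_le_ofReal (hk p hp)

lemma integrableOn_box {F : Type*} [NormedAddCommGroup F] {f : ℝ × ℝ → F} (hf : Continuous f)
    (t σ ε : ℝ) : IntegrableOn f (box t σ ε) :=
  (hf.continuousOn.integrableOn_compact (isCompact_Icc.prod isCompact_Icc)).mono_set
    (prod_mono Ioo_subset_Icc_self Ioo_subset_Icc_self)

variable {F : Type*} [NormedAddCommGroup F] [NormedSpace ℝ F]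

lemma integral_density_smul_affine [CompleteSpace F] (κ σ : ℝ) (x y : F) :
    ∫ β in (-σ)..σ, (1 - κ * β) • (x + β • y) = (2 * σ) • (x - (σ ^ 2 / 3 * κ) • y) := by
  have hexpand : ∀ β : ℝ, (1 - κ * β) • (x + β • y) = x + β • (y - κ • x) - β ^ 2 • (κ • y) :=
    fun β => by module
  simp only [hexpand]
  rw [intervalIntegral.integral_sub, intervalIntegral.integral_add,
    intervalIntegral.integral_smul_const, intervalIntegral.integral_smul_const]
  · simp only [intervalIntegral.integral_const, integral_id, integral_pow]
    module
  all_goals exact Continuous.intervalIntegrable (by fun_prop) _ _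

theorem setIntegral_box_density_smul_affine [CompleteSpace F] {f g : ℝ → F} (hk : Continuous k)
    (hf : Continuous f) (hg : Continuous g) (hσ : 0 ≤ σ) (hε : 0 ≤ ε) :
    ∫ p in box t σ ε, (1 - k p.1 * p.2) • (f p.1 + p.2 • g p.1) =
      ∫ s in (t - ε)..(t + ε), (2 * σ) • (f s - (σ ^ 2 / 3 * k s) • g s) := by
  have hint : IntegrableOn (fun p : ℝ × ℝ => (1 - k p.1 * p.2) • (f p.1 + p.2 • g p.1))
      (box t σ ε) := integrableOn_box (by fun_prop) t σ ε
  rw [Measure.volume_eq_prod] at hint ⊢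
  rw [box, setIntegral_prod _ hint, intervalIntegral.integral_of_le (by linarith),
    integral_Ioc_eq_integral_Ioo]
  congr! with _
  rw [← integral_Ioc_eq_integral_Ioo, ← intervalIntegral.integral_of_le (by linarith),
    ← integral_density_smul_affine]

lemma integral_boxMeasure (hk : Continuous k) (hσ : 0 < σ) (hε : 0 < ε)
    (hjac : ∀ p ∈ box t σ ε, 0 ≤ 1 - k p.1 * p.2) (F : ℝ × ℝ → F) :
    ∫ p, F p ∂boxMeasure k t σ ε =
      (4 * σ * ε)⁻¹ • ∫ p in box t σ ε, (1 - k p.1 * p.2) • F p := by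
  rw [boxMeasure, integral_smul_measure,
    integral_withDensity_eq_integral_toReal_smul (by fun_prop) (by simp), ENNReal.toReal_inv,
    ENNReal.toReal_ofReal (by positivity)]
  congr 1
  exact setIntegral_congr_fun (measurableSet_box t σ ε) fun p hp => by
    simp only [ENNReal.toReal_ofReal (hjac p hp)]

lemma integrable_boxMeasure {F : ℝ × ℝ → F} (hF : Continuous F) (hk : Continuous k) (hσ : 0 < σ)
    (hε : 0 < ε) : Integrable F (boxMeasure k t σ ε) := by
  refine Integrable.smul_measure ?_ (by simpa using by positivity)
  rw [integrable_withDensity_iff_integrable_smul' (by fun_prop) (by simp)]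
  simp_rw [ENNReal.toReal_ofReal']
  exact integrableOn_box (by fun_prop) t σ ε

lemma lintegral_box_density (hk : Continuous k) (hσ : 0 ≤ σ) (hε : 0 ≤ ε)
    (hjac : ∀ p ∈ box t σ ε, 0 ≤ 1 - k p.1 * p.2) :
    ∫⁻ p in box t σ ε, ENNReal.ofReal (1 - k p.1 * p.2) = ENNReal.ofReal (4 * σ * ε) := by
  rw [← ofReal_integral_eq_lintegral_ofReal (integrableOn_box (by fun_prop) t σ ε)
    ((ae_restrict_mem (measurableSet_box t σ ε)).mono hjac)]
  congr 1
  simpa [← two_mul, mul_comm, mul_left_comm, mul_assoc, show (2 : ℝ) * 2 = 4 by norm_num] using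
    setIntegral_box_density_smul_affine (t := t) (f := fun _ => (1 : ℝ)) (g := 0) hk
      continuous_const continuous_const hσ hε

lemma isProbabilityMeasure_boxMeasure (hk : Continuous k) (hσ : 0 < σ) (hε : 0 < ε)
    (hjac : ∀ p ∈ box t σ ε, 0 ≤ 1 - k p.1 * p.2) :
    IsProbabilityMeasure (boxMeasure k t σ ε) := by
  refine ⟨?_⟩
  rw [boxMeasure, Measure.smul_apply, withDensity_apply _ .univ, Measure.restrict_univ,
    lintegral_box_density hk hσ.le hε.le hjac, smul_eq_mul]
  exact ENNReal.inv_mul_cancel (by simpa using by positivity) ENNReal.ofReal_ne_top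

end BoxMeasure

section TestMeasure

variable {E : Type*} [NormedAddCommGroup E] [InnerProductSpace ℝ E]
  [Fact (Module.finrank ℝ E = 2)] (o : Orientation ℝ E (Fin 2)) {γ : ℝ → E} {t σ ε : ℝ}

attribute [local instance] FiniteDimensional.of_fact_finrank_eq_two

local notation "J" => o.rightAngleRotation

lemma continuous_signedCurvature (hγ : ContDiff ℝ 2 γ) : Continuous (signedCurvature o γ) := by
  have hγ' : ContDiff ℝ 1 (deriv γ) := hγ.deriv'
  exact (o.rightAngleRotation.continuous.comp hγ'.continuous).inner hγ'.continuous_deriv_one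

theorem testMeasure_eq_map [MeasurableSpace E] [BorelSpace E] (hγ : ContDiff ℝ 2 γ)
    (hunit : ∀ s, ‖deriv γ s‖ = 1) (hσ : 0 ≤ σ) (hε : 0 ≤ ε)
    (hjac : ∀ p ∈ box t σ ε, 0 ≤ 1 - signedCurvature o γ p.1 * p.2)
    (hinj : InjOn (fermiChart o γ) (box t σ ε)) :
    testMeasure o γ t σ ε = (boxMeasure (signedCurvature o γ) t σ ε).map (fermiChart o γ) := by
  have hφ : Measurable (fermiChart o γ) := (contDiff_fermiChart o hγ).continuous.measurable
  have hdensity : (fun p : ℝ × ℝ => ENNReal.ofReal |o.areaForm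
      ((1 - signedCurvature o γ p.1 * p.2) • deriv γ p.1) (J (deriv γ p.1))|)
      =ᵐ[volume.restrict (box t σ ε)]
        fun p => ENNReal.ofReal (1 - signedCurvature o γ p.1 * p.2) := by
    filter_upwards [ae_restrict_mem (measurableSet_box t σ ε)] with p hp
    simp [hunit, abs_of_nonneg (hjac p hp)]
  have hmap := map_withDensity_abs_areaForm o (measurableSet_box t σ ε) hφ
    (fun p _ => (hasFDerivAt_fermiChart o hγ hunit p).hasFDerivWithinAt) hinj
  rw [withDensity_congr_ae hdensity] at hmap
  have hmass : volume (fermiChart o γ '' box t σ ε) = ENNReal.ofReal (4 * σ * ε) := by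
    rw [← Measure.restrict_apply_univ, ← hmap, Measure.map_apply hφ .univ, preimage_univ,
      withDensity_apply _ .univ, Measure.restrict_univ,
      lintegral_box_density (continuous_signedCurvature o hγ) hσ hε hjac]
  rw [testMeasure, normRestrict, hmass, ← hmap, boxMeasure, Measure.map_smul]

theorem integral_fermiChart_boxMeasure (hγ : ContDiff ℝ 2 γ) (hunit : ∀ s, ‖deriv γ s‖ = 1)
    (hσ : 0 < σ) (hε : 0 < ε) (hjac : ∀ p ∈ box t σ ε, 0 ≤ 1 - signedCurvature o γ p.1 * p.2) :
    ∫ p, fermiChart o γ p ∂boxMeasure (signedCurvature o γ) t σ ε =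
      (2 * ε)⁻¹ • ∫ s in (t - ε)..(t + ε), (γ s - (σ ^ 2 / 3) • deriv (deriv γ) s) := by
  have hk := continuous_signedCurvature o hγ
  have hγ' : ContDiff ℝ 1 (deriv γ) := hγ.deriv'
  have hcoeff : (4 * σ * ε)⁻¹ * (2 * σ) = (2 * ε)⁻¹ := by
    field_simp
    norm_num
  rw [integral_boxMeasure hk hσ hε hjac]
  simp only [fermiChart]
  rw [setIntegral_box_density_smul_affine (g := fun s => J (deriv γ s)) hk hγ.continuous
      (o.rightAngleRotation.continuous.comp hγ'.continuous) hσ.le hε.le,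
    intervalIntegral.integral_smul, smul_smul, hcoeff]
  simp_rw [mul_smul, ← deriv_deriv_eq_signedCurvature_smul o hγ hunit]

end TestMeasure

lemma integral_sub_integral_eq_integral_sub {F : Type*} [NormedAddCommGroup F] [NormedSpace ℝ F]
    {G : ℝ → F} (hG : Continuous G) (h d ε : ℝ) :
    (∫ s in (h + d - ε)..(h + d + ε), G s) - ∫ s in (h - d - ε)..(h - d + ε), G s =
      ∫ w in (d - ε)..(d + ε), (G (h + w) - G (h - w)) := by
  rw [intervalIntegral.integral_sub, intervalIntegral.integral_comp_add_left,
    intervalIntegral.integral_comp_sub_left]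
  · ring_nf
  all_goals exact Continuous.intervalIntegrable (by fun_prop) _ _

section Chord

variable {F : Type*} [NormedAddCommGroup F] [InnerProductSpace ℝ F] {γ : ℝ → F} {h d w σ ε K : ℝ}

lemma abs_inner_add_sub_sub_le (hγ : ContDiff ℝ 5 γ) (hunit : ∀ s, ‖deriv γ s‖ = 1) (hw : 0 ≤ w)
    (hK : ∀ s ∈ Icc (h - w) (h + w), ‖iteratedDeriv 5 γ s‖ ≤ K) :
    |⟪γ (h + w) - γ (h - w), deriv γ h⟫_ℝ - (2 * w - ‖deriv (deriv γ) h‖ ^ 2 / 3 * w ^ 3)| ≤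
      2 * K * w ^ 5 := by
  have hγ' : ContDiff ℝ 4 (deriv γ) := hγ.deriv'
  have hcurv : ⟪iteratedDeriv 3 γ h, deriv γ h⟫_ℝ = -‖deriv (deriv γ) h‖ ^ 2 := by
    simpa [iteratedDeriv_succ] using
      inner_deriv_deriv_of_norm_eq_one (hγ'.of_le (by norm_num)) hunit h
  have hexpand : ⟪γ (h + w) - γ (h - w) - (2 * w) • deriv γ h
      - (w ^ 3 / 3) • iteratedDeriv 3 γ h, deriv γ h⟫_ℝ =
      ⟪γ (h + w) - γ (h - w), deriv γ h⟫_ℝ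
        - (2 * w - ‖deriv (deriv γ) h‖ ^ 2 / 3 * w ^ 3) := by
    rw [inner_sub_left, inner_sub_left, real_inner_smul_left, real_inner_smul_left, hcurv,
      real_inner_self_eq_norm_sq, hunit]
    ring
  rw [← hexpand]
  refine (abs_real_inner_le_norm _ _).trans ?_
  rw [hunit, mul_one]
  exact norm_add_sub_sub_sub_sub_le hγ hw hK

lemma abs_norm_add_sub_sub_le (hγ : ContDiff ℝ 5 γ) (hunit : ∀ s, ‖deriv γ s‖ = 1) (hd : 0 < d)
    (hK : ∀ i ≤ 5, ∀ s ∈ Icc (h - d) (h + d), ‖iteratedDeriv i γ s‖ ≤ K) :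
    |‖γ (h + d) - γ (h - d)‖ - (2 * d - ‖deriv (deriv γ) h‖ ^ 2 / 3 * d ^ 3)| ≤
      (2 * K + K ^ 2) * d ^ 5 := by
  have hinner := abs_inner_add_sub_sub_le hγ hunit hd.le (hK 5 le_rfl)
  have hlower : ⟪γ (h + d) - γ (h - d), deriv γ h⟫_ℝ ≤ ‖γ (h + d) - γ (h - d)‖ := by
    simpa [hunit] using real_inner_le_norm (γ (h + d) - γ (h - d)) (deriv γ h)
  have hexcess : ‖γ (h + d) - γ (h - d)‖ - ⟪γ (h + d) - γ (h - d), deriv γ h⟫_ℝ ≤ K ^ 2 * d ^ 5 :=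
    calc ‖γ (h + d) - γ (h - d)‖ - ⟪γ (h + d) - γ (h - d), deriv γ h⟫_ℝ
        ≤ ‖γ (h + d) - γ (h - d) - (2 * d) • deriv γ h‖ ^ 2 / (2 * (2 * d)) :=
          norm_sub_inner_le_sq_norm_sub (hunit h) _ (by positivity)
      _ ≤ (2 * K * d ^ 3) ^ 2 / (2 * (2 * d)) := by
          gcongr
          exact norm_add_sub_sub_sub_le (hγ.of_le (by norm_num)) hd.le (hK 3 (by norm_num))
      _ = K ^ 2 * d ^ 5 := by
          field_simp
  rw [abs_le] at hinner ⊢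
  constructor <;> nlinarith [mul_nonneg (sq_nonneg K) (pow_nonneg hd.le 5)]

lemma abs_inner_sub_smul_add_sub_sub_le (hγ : ContDiff ℝ 5 γ) (hunit : ∀ s, ‖deriv γ s‖ = 1)
    (hw : 0 ≤ w) (hK : ∀ i ≤ 5, ∀ s ∈ Icc (h - w) (h + w), ‖iteratedDeriv i γ s‖ ≤ K) (σ : ℝ) :
    |⟪(γ (h + w) - (σ ^ 2 / 3) • deriv (deriv γ) (h + w))
        - (γ (h - w) - (σ ^ 2 / 3) • deriv (deriv γ) (h - w)), deriv γ h⟫_ℝ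
      - (2 * w - ‖deriv (deriv γ) h‖ ^ 2 / 3 * w ^ 3)| ≤ 2 * K * w ^ 5 + K * σ ^ 2 * w := by
  have hK₀ : 0 ≤ K := (norm_nonneg _).trans (hK 5 le_rfl h ⟨by linarith, by linarith⟩)
  have hγ'' : ContDiff ℝ 3 (deriv (deriv γ)) := ContDiff.deriv' (n := 3) hγ.deriv'
  have hsecond : |⟪deriv (deriv γ) (h + w) - deriv (deriv γ) (h - w), deriv γ h⟫_ℝ| ≤
      2 * K * w := by
    refine (abs_real_inner_le_norm _ _).trans ?_
    rw [hunit, mul_one]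
    refine norm_add_sub_sub_le (hγ''.of_le (by norm_num)) hw fun s hs => ?_
    simpa [iteratedDeriv_succ] using hK 3 (by norm_num) s hs
  have hfirst := abs_inner_add_sub_sub_le hγ hunit hw (hK 5 le_rfl)
  rw [sub_sub_sub_comm, ← smul_sub, inner_sub_left, real_inner_smul_left]
  rw [abs_le] at hfirst hsecond ⊢
  have hKσw : 0 ≤ K * σ ^ 2 * w := by positivity
  constructor <;> nlinarith [sq_nonneg σ]

lemma inner_average_sub_inner_average [CompleteSpace F] {G : ℝ → F} (hG : Continuous G)
    (h d ε : ℝ) (e : F) :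
    ⟪(2 * ε)⁻¹ • ∫ s in (h + d - ε)..(h + d + ε), G s, e⟫_ℝ
        - ⟪(2 * ε)⁻¹ • ∫ s in (h - d - ε)..(h - d + ε), G s, e⟫_ℝ =
      (2 * ε)⁻¹ * ∫ w in (d - ε)..(d + ε), ⟪G (h + w) - G (h - w), e⟫_ℝ := by
  rw [← inner_sub_left, ← smul_sub, integral_sub_integral_eq_integral_sub hG,
    real_inner_smul_left]
  simp_rw [real_inner_comm e]
  rw [← innerSL_apply_apply, ← (innerSL ℝ e).intervalIntegral_comp_comm
    (Continuous.intervalIntegrable (by fun_prop) _ _)]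
  rfl

lemma integral_two_mul_sub_mul_cube (a d ε : ℝ) (hε : ε ≠ 0) :
    (2 * ε)⁻¹ * ∫ w in (d - ε)..(d + ε), (2 * w - a * w ^ 3) =
      2 * d - a * (d ^ 3 + d * ε ^ 2) := by
  rw [intervalIntegral.integral_sub, intervalIntegral.integral_const_mul,
    intervalIntegral.integral_const_mul, integral_id, integral_pow]
  · field_simp
    ring
  all_goals exact Continuous.intervalIntegrable (by fun_prop) _ _

theorem abs_inner_average_sub_average_sub_le [CompleteSpace F] (hγ : ContDiff ℝ 5 γ)
    (hunit : ∀ s, ‖deriv γ s‖ = 1) (hε : 0 < ε) (hεd : ε ≤ d)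
    (hK : ∀ i ≤ 5, ∀ s ∈ Icc (h - 2 * d) (h + 2 * d), ‖iteratedDeriv i γ s‖ ≤ K) (σ : ℝ) :
    |⟪(2 * ε)⁻¹ • ∫ s in (h + d - ε)..(h + d + ε), (γ s - (σ ^ 2 / 3) • deriv (deriv γ) s),
          deriv γ h⟫_ℝ
        - ⟪(2 * ε)⁻¹ • ∫ s in (h - d - ε)..(h - d + ε), (γ s - (σ ^ 2 / 3) • deriv (deriv γ) s),
          deriv γ h⟫_ℝ
      - (2 * d - ‖deriv (deriv γ) h‖ ^ 2 / 3 * (d ^ 3 + d * ε ^ 2))| ≤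
      2 * K * (2 * d) ^ 5 + K * σ ^ 2 * (2 * d) := by
  set G : ℝ → F := fun s => γ s - (σ ^ 2 / 3) • deriv (deriv γ) s
  set a := ‖deriv (deriv γ) h‖ ^ 2 / 3
  set C := 2 * K * (2 * d) ^ 5 + K * σ ^ 2 * (2 * d)
  have hK₀ : 0 ≤ K := (norm_nonneg _).trans (hK 5 le_rfl h ⟨by linarith, by linarith⟩)
  have hGcont : Continuous G := by
    have hγ'' : ContDiff ℝ 3 (deriv (deriv γ)) := ContDiff.deriv' (n := 3) hγ.deriv'
    exact hγ.continuous.sub (hγ''.continuous.const_smul _)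
  have hpointwise : ∀ w ∈ uIoc (d - ε) (d + ε),
      ‖⟪G (h + w) - G (h - w), deriv γ h⟫_ℝ - (2 * w - a * w ^ 3)‖ ≤ C := by
    intro w hw
    rw [uIoc_of_le (by linarith)] at hw
    have hw₀ : 0 ≤ w := by linarith [hw.1]
    have hw₂ : w ≤ 2 * d := by linarith [hw.2]
    refine (abs_inner_sub_smul_add_sub_sub_le hγ hunit hw₀
      (fun i hi s hs => hK i hi s (Icc_sub_add_mono hw₂ hs)) σ).trans ?_
    unfold C
    gcongr
  rw [inner_average_sub_inner_average hGcont, ← integral_two_mul_sub_mul_cube a d ε hε.ne',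
    ← mul_sub, ← intervalIntegral.integral_sub, abs_mul, abs_of_pos (by positivity),
    inv_mul_le_iff₀ (by positivity), mul_comm]
  · refine (intervalIntegral.norm_integral_le_of_norm_le_const hpointwise).trans_eq ?_
    rw [add_sub_sub_cancel, ← two_mul, abs_of_pos (by positivity)]
  all_goals exact Continuous.intervalIntegrable (by fun_prop) _ _

end Chord

section Reflection

variable {E : Type*} [NormedAddCommGroup E] [InnerProductSpace ℝ E]
  [Fact (Module.finrank ℝ E = 2)] (o : Orientation ℝ E (Fin 2)) {γ : ℝ → E}
  {h d w s σ β K : ℝ}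

attribute [local instance] FiniteDimensional.of_fact_finrank_eq_two

local notation "J" => o.rightAngleRotation

lemma abs_signedCurvature_mul_le (hγ : ContDiff ℝ 2 γ) (hunit : ∀ s, ‖deriv γ s‖ = 1)
    (hK : ‖iteratedDeriv 2 γ s‖ ≤ K) (hβ : |β| ≤ σ) : |signedCurvature o γ s * β| ≤ K * σ := by
  have hK₀ : 0 ≤ K := (norm_nonneg _).trans hK
  rw [abs_mul, abs_signedCurvature o hγ hunit]
  gcongr
  simpa [iteratedDeriv_succ] using hK

lemma norm_fermiChart_sub_fermiChart_sub_le (hγ : ContDiff ℝ 4 γ) (hunit : ∀ s, ‖deriv γ s‖ = 1)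
    (hw : 0 ≤ w) (hK : ∀ i ≤ 4, ∀ s ∈ Icc (h - w) (h + w), ‖iteratedDeriv i γ s‖ ≤ K)
    (hβ : |β| ≤ 1) :
    ‖fermiChart o γ (h + w, β) - fermiChart o γ (h - w, β)
      - (2 * w * (1 - signedCurvature o γ h * β)) • deriv γ h‖ ≤ 4 * K * w ^ 3 := by
  have hγ' : ContDiff ℝ 3 (deriv γ) := hγ.deriv'
  have hposition := norm_add_sub_sub_sub_le (hγ.of_le (by norm_num)) hw (hK 3 (by norm_num))
  have hnormal : ‖β • J (deriv γ (h + w) - deriv γ (h - w) - (2 * w) • deriv (deriv γ) h)‖ ≤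
      2 * K * w ^ 3 := by
    rw [norm_smul, LinearIsometryEquiv.norm_map]
    refine (mul_le_of_le_one_left (norm_nonneg _) hβ).trans
      (norm_add_sub_sub_sub_le hγ' hw fun s hs => ?_)
    rw [← iteratedDeriv_succ']
    exact hK 4 le_rfl s hs
  have hsplit : fermiChart o γ (h + w, β) - fermiChart o γ (h - w, β)
      - (2 * w * (1 - signedCurvature o γ h * β)) • deriv γ h =
      (γ (h + w) - γ (h - w) - (2 * w) • deriv γ h)
        + β • J (deriv γ (h + w) - deriv γ (h - w) - (2 * w) • deriv (deriv γ) h) := by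
    simp only [fermiChart, map_sub, map_smul,
      rightAngleRotation_deriv_deriv o (hγ.of_le (by norm_num)) hunit]
    module
  rw [hsplit]
  linarith [norm_add_le (γ (h + w) - γ (h - w) - (2 * w) • deriv γ h)
    (β • J (deriv γ (h + w) - deriv γ (h - w) - (2 * w) • deriv (deriv γ) h))]

lemma dist_fermiChart_reflect_le (hγ : ContDiff ℝ 4 γ) (hunit : ∀ s, ‖deriv γ s‖ = 1)
    (hw : 0 < w) (hK : ∀ i ≤ 4, ∀ s ∈ Icc (h - w) (h + w), ‖iteratedDeriv i γ s‖ ≤ K)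
    (hβ : |β| ≤ 1) (hKβ : K * |β| ≤ 1 / 2) :
    dist (fermiChart o γ (h - w, β)) (fermiChart o γ (h + w, β)) ≤
      ⟪fermiChart o γ (h + w, β), deriv γ h⟫_ℝ - ⟪fermiChart o γ (h - w, β), deriv γ h⟫_ℝ
        + 8 * K ^ 2 * w ^ 5 := by
  set r := 2 * w * (1 - signedCurvature o γ h * β)
  set v := fermiChart o γ (h + w, β) - fermiChart o γ (h - w, β)
  have hcurv : |signedCurvature o γ h * β| ≤ 1 / 2 :=
    (abs_signedCurvature_mul_le o (hγ.of_le (by norm_num)) hunit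
      (hK 2 (by norm_num) h ⟨by linarith, by linarith⟩) le_rfl).trans hKβ
  have hr : w ≤ r := by nlinarith [abs_le.1 hcurv]
  have hexcess : ‖v‖ - ⟪v, deriv γ h⟫_ℝ ≤ 8 * K ^ 2 * w ^ 5 :=
    calc ‖v‖ - ⟪v, deriv γ h⟫_ℝ ≤ ‖v - r • deriv γ h‖ ^ 2 / (2 * r) :=
          norm_sub_inner_le_sq_norm_sub (hunit h) v (hw.trans_le hr)
      _ ≤ (4 * K * w ^ 3) ^ 2 / (2 * w) := by
          gcongr
          exact norm_fermiChart_sub_fermiChart_sub_le o hγ hunit hw.le hK hβ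
      _ = 8 * K ^ 2 * w ^ 5 := by
          field_simp
          ring
  rw [dist_comm, dist_eq_norm, ← inner_sub_left]
  linarith

lemma dist_fermiChart_le (hγ : Differentiable ℝ γ) (hunit : ∀ s, ‖deriv γ s‖ = 1) (p q : ℝ × ℝ) :
    dist (fermiChart o γ p) (fermiChart o γ q) ≤ |p.1 - q.1| + (|p.2| + |q.2|) := by
  have hlip : LipschitzWith 1 γ :=
    lipschitzWith_of_nnnorm_deriv_le hγ fun s => (NNReal.coe_le_coe.1 (by simp [hunit]))
  refine (dist_add_add_le _ _ _ _).trans (add_le_add ?_ ?_)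
  · simpa [Real.dist_eq] using hlip.dist_le_mul p.1 q.1
  · refine (dist_le_norm_add_norm _ _).trans_eq ?_
    simp [norm_smul, hunit]

lemma mul_one_sub_signedCurvature_reflect_le (hγ : ContDiff ℝ 3 γ)
    (hunit : ∀ s, ‖deriv γ s‖ = 1)
    (hK : ∀ i ≤ 3, ∀ s ∈ Icc (h - 2 * d) (h + 2 * d), ‖iteratedDeriv i γ s‖ ≤ K)
    (hd : 0 ≤ d) (hβ : |β| ≤ σ) (hKσ : K * σ ≤ 1 / 2) (hs : s ∈ Icc (h - 2 * d) (h + 2 * d)) :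
    (1 - 8 * K * d * σ) * (1 - signedCurvature o γ (2 * h - s) * β) ≤
      1 - signedCurvature o γ s * β := by
  have hs' : 2 * h - s ∈ Icc (h - 2 * d) (h + 2 * d) := ⟨by linarith [hs.2], by linarith [hs.1]⟩
  have hK₀ : 0 ≤ K := (norm_nonneg _).trans (hK 3 le_rfl s hs)
  have hcurv : |signedCurvature o γ (2 * h - s) * β| ≤ 1 / 2 :=
    (abs_signedCurvature_mul_le o (hγ.of_le (by norm_num)) hunit
      (hK 2 (by norm_num) _ hs') hβ).trans hKσ
  have hdiff : |(signedCurvature o γ s - signedCurvature o γ (2 * h - s)) * β| ≤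
      K * (4 * d) * σ := by
    rw [abs_mul]
    gcongr
    refine (abs_signedCurvature_sub_le o hγ hunit (convex_Icc _ _) (hK 3 le_rfl) hs hs').trans ?_
    gcongr
    rw [abs_le]
    constructor <;> linarith [hs.1, hs.2]
  have hσ : 0 ≤ σ := (abs_nonneg β).trans hβ
  nlinarith [abs_le.1 hcurv, abs_le.1 hdiff, mul_nonneg (mul_nonneg hK₀ hd) hσ]

end Reflection

lemma ae_prod_mem_of_ae_mem {X Y : Type*} [MeasurableSpace X] [MeasurableSpace Y] {μ : Measure X}
    {ν : Measure Y} [SFinite ν] {A : Set X} {B : Set Y} (hA : ∀ᵐ x ∂μ, x ∈ A)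
    (hB : ∀ᵐ y ∂ν, y ∈ B) : ∀ᵐ z ∂μ.prod ν, z ∈ A ×ˢ B :=
  (Measure.quasiMeasurePreserving_fst.ae hA).and (Measure.quasiMeasurePreserving_snd.ae hB)

section Transport

variable {Z E : Type*} [MeasurableSpace Z] [NormedAddCommGroup E] [InnerProductSpace ℝ E]
  [CompleteSpace E] {φ : Z → E} {e : E}

lemma inner_integral_left {m : Measure Z} (hφ : Integrable φ m) (e : E) :
    ⟪∫ z, φ z ∂m, e⟫_ℝ = ∫ z, ⟪φ z, e⟫_ℝ ∂m := by
  simp_rw [real_inner_comm e, integral_inner hφ]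

variable [SecondCountableTopology E] [MeasurableSpace E] [BorelSpace E] {m₀ m₁ : Measure Z}
  [IsProbabilityMeasure m₀] [IsProbabilityMeasure m₁]

lemma inner_integral_sub_inner_integral_le_W1 (hφ : Measurable φ) (h₀ : Integrable φ m₀)
    (h₁ : Integrable φ m₁) (he : ‖e‖ = 1) :
    ⟪∫ z, φ z ∂m₁, e⟫_ℝ - ⟪∫ z, φ z ∂m₀, e⟫_ℝ ≤ W1 (m₀.map φ) (m₁.map φ) := by
  have := Measure.isProbabilityMeasure_map (μ := m₀) hφ.aemeasurable
  have := Measure.isProbabilityMeasure_map (μ := m₁) hφ.aemeasurable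
  have hdist {m : Measure Z} (hm : Integrable φ m) : Integrable (dist (0 : E)) (m.map φ) :=
    (integrable_map_measure (by fun_prop) hφ.aemeasurable).2
      (hm.norm.congr (.of_forall fun z => (dist_zero_left (φ z)).symm))
  have hinner {m : Measure Z} (hm : Integrable φ m) :
      ⟪∫ z, φ z ∂m, e⟫_ℝ = ∫ x, ⟪x, e⟫_ℝ ∂m.map φ := by
    rw [inner_integral_left hm, integral_map hφ.aemeasurable (by fun_prop)]
  rw [hinner h₀, hinner h₁]
  exact integral_sub_integral_le_W1 (lipschitzWith_one_inner_right he) (hdist h₀) (hdist h₁)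

lemma W1_map_le_inner_of_partial_transport {τ : Z → Z} (hφ : Measurable φ) (hτ : Measurable τ)
    (h₀ : Integrable φ m₀) (h₁ : Integrable φ m₁) {l b₁ b₂ : ℝ} (hl : 0 ≤ l)
    (hle : ENNReal.ofReal l • m₀.map τ ≤ m₁)
    (hτb : ∀ᵐ z ∂m₀, dist (φ z) (φ (τ z)) ≤ ⟪φ (τ z), e⟫_ℝ - ⟪φ z, e⟫_ℝ + b₁)
    (hb : ∀ᵐ z ∂m₀.prod m₁, dist (φ z.1) (φ z.2) ≤ ⟪φ z.2, e⟫_ℝ - ⟪φ z.1, e⟫_ℝ + b₂) :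
    W1 (m₀.map φ) (m₁.map φ) ≤
      ⟪∫ z, φ z ∂m₁, e⟫_ℝ - ⟪∫ z, φ z ∂m₀, e⟫_ℝ + (l * b₁ + (1 - l) * b₂) := by
  rw [inner_integral_left h₀, inner_integral_left h₁]
  exact W1_map_le_of_partial_transport (f := fun x => ⟪x, e⟫_ℝ) hφ hτ (by fun_prop)
    (h₀.inner_const e) (h₁.inner_const e) hl hle hτb hb

end Transport

section Asymptotics

variable {E : Type*} [NormedAddCommGroup E] [InnerProductSpace ℝ E]
  [Fact (Module.finrank ℝ E = 2)] (o : Orientation ℝ E (Fin 2)) {γ : ℝ → E} {h d σ ε K : ℝ}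

attribute [local instance] FiniteDimensional.of_fact_finrank_eq_two

lemma abs_snd_le_of_mem_box {p : ℝ × ℝ} {t : ℝ} (hp : p ∈ box t σ ε) : |p.2| ≤ σ :=
  (abs_lt.2 hp.2).le

lemma one_sub_signedCurvature_mul_nonneg (hγ : ContDiff ℝ 2 γ) (hunit : ∀ s, ‖deriv γ s‖ = 1)
    {S : Set ℝ} (hK : ∀ s ∈ S, ‖iteratedDeriv 2 γ s‖ ≤ K) (hKσ : K * σ ≤ 1) {t : ℝ}
    (hS : Ioo (t - ε) (t + ε) ⊆ S) :
    ∀ p ∈ box t σ ε, 0 ≤ 1 - signedCurvature o γ p.1 * p.2 := fun p hp => by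
  have := abs_signedCurvature_mul_le o hγ hunit (hK p.1 (hS hp.1)) (abs_snd_le_of_mem_box hp)
  linarith [le_abs_self (signedCurvature o γ p.1 * p.2)]

lemma smul_map_reflect_boxMeasure_le (hγ : ContDiff ℝ 3 γ) (hunit : ∀ s, ‖deriv γ s‖ = 1)
    (hεd : ε ≤ d) (hd : 0 ≤ d)
    (hK : ∀ i ≤ 3, ∀ s ∈ Icc (h - 2 * d) (h + 2 * d), ‖iteratedDeriv i γ s‖ ≤ K)
    (hKσ : K * σ ≤ 1 / 2) (hl : 0 ≤ 1 - 8 * K * d * σ) :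
    ENNReal.ofReal (1 - 8 * K * d * σ) •
        (boxMeasure (signedCurvature o γ) (h - d) σ ε).map (fun p => (2 * h - p.1, p.2)) ≤
      boxMeasure (signedCurvature o γ) (h + d) σ ε := by
  rw [map_reflect_boxMeasure, show 2 * h - (h - d) = h + d by ring]
  exact smul_boxMeasure_le hl fun p hp =>
    mul_one_sub_signedCurvature_reflect_le o hγ hunit hK hd (abs_snd_le_of_mem_box hp) hKσ
      ⟨by linarith [hp.1.1], by linarith [hp.1.2]⟩

lemma dist_fermiChart_reflect_le_of_mem_box (hγ : ContDiff ℝ 4 γ) (hunit : ∀ s, ‖deriv γ s‖ = 1)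
    (hεd : ε ≤ d) (hK : ∀ i ≤ 4, ∀ s ∈ Icc (h - 2 * d) (h + 2 * d), ‖iteratedDeriv i γ s‖ ≤ K)
    (hσ : σ ≤ 1) (hKσ : K * σ ≤ 1 / 2) {p : ℝ × ℝ} (hp : p ∈ box (h - d) σ ε) :
    dist (fermiChart o γ p) (fermiChart o γ (2 * h - p.1, p.2)) ≤
      ⟪fermiChart o γ (2 * h - p.1, p.2), deriv γ h⟫_ℝ - ⟪fermiChart o γ p, deriv γ h⟫_ℝ
        + 8 * K ^ 2 * (2 * d) ^ 5 := by
  obtain ⟨s, β⟩ := p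
  obtain ⟨w, rfl⟩ : ∃ w, s = h - w := ⟨h - s, by ring⟩
  have hw : 0 < w := by linarith [hp.1.2]
  have hw₂ : w ≤ 2 * d := by linarith [hp.1.1]
  have hβ := abs_snd_le_of_mem_box hp
  have hK₀ : 0 ≤ K := (norm_nonneg _).trans (hK 4 le_rfl h ⟨by linarith, by linarith⟩)
  have hle := dist_fermiChart_reflect_le o hγ hunit hw
    (fun i hi s hs => hK i hi s (Icc_sub_add_mono hw₂ hs)) (hβ.trans hσ)
    ((mul_le_mul_of_nonneg_left hβ hK₀).trans hKσ)
  rw [show 2 * h - (h - w) = h + w by ring]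
  refine hle.trans ?_
  gcongr

lemma dist_fermiChart_le_of_mem_box (hγ : Differentiable ℝ γ) (hunit : ∀ s, ‖deriv γ s‖ = 1)
    (hεd : ε ≤ d) (hσd : σ ≤ d) {p q : ℝ × ℝ} (hp : p ∈ box (h - d) σ ε)
    (hq : q ∈ box (h + d) σ ε) : dist (fermiChart o γ p) (fermiChart o γ q) ≤ 6 * d := by
  have hpq : |p.1 - q.1| ≤ 4 * d := by
    rw [abs_le]
    constructor <;> linarith [hp.1.1, hp.1.2, hq.1.1, hq.1.2]
  linarith [dist_fermiChart_le o hγ hunit p q, abs_snd_le_of_mem_box hp, abs_snd_le_of_mem_box hq]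

variable [MeasurableSpace E] [BorelSpace E]

theorem W1_map_boxMeasure_le (hγ : ContDiff ℝ 4 γ) (hunit : ∀ s, ‖deriv γ s‖ = 1) (hε : 0 < ε)
    (hεd : ε ≤ d) (hσ : 0 < σ) (hσd : σ ≤ d)
    (hK : ∀ i ≤ 4, ∀ s ∈ Icc (h - 2 * d) (h + 2 * d), ‖iteratedDeriv i γ s‖ ≤ K)
    (hKd : 8 * K * d ≤ 1) :
    W1 ((boxMeasure (signedCurvature o γ) (h - d) σ ε).map (fermiChart o γ))
        ((boxMeasure (signedCurvature o γ) (h + d) σ ε).map (fermiChart o γ)) ≤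
      ⟪∫ p, fermiChart o γ p ∂boxMeasure (signedCurvature o γ) (h + d) σ ε, deriv γ h⟫_ℝ
        - ⟪∫ p, fermiChart o γ p ∂boxMeasure (signedCurvature o γ) (h - d) σ ε, deriv γ h⟫_ℝ
        + (8 * K ^ 2 * (2 * d) ^ 5 + 96 * K * d ^ 2 * σ) := by
  have hK₁ : 1 ≤ K := by
    simpa [hunit] using hK 1 (by norm_num) h ⟨by linarith, by linarith⟩
  have hd₁ : d ≤ 1 := by nlinarith
  have hKσ : K * σ ≤ 1 / 2 := by nlinarith
  have hl : 0 ≤ 1 - 8 * K * d * σ := by nlinarith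
  have hγ₂ : ContDiff ℝ 2 γ := hγ.of_le (by norm_num)
  have hφ := (contDiff_fermiChart o hγ₂).continuous
  have hk := continuous_signedCurvature o hγ₂
  have hjac {t : ℝ} (ht : Ioo (t - ε) (t + ε) ⊆ Icc (h - 2 * d) (h + 2 * d)) :=
    one_sub_signedCurvature_mul_nonneg o hγ₂ hunit (hK 2 (by norm_num)) (hKσ.trans (by norm_num)) ht
  have := isProbabilityMeasure_boxMeasure hk hσ hε (hjac (t := h - d) fun s hs =>
    ⟨by linarith [hs.1], by linarith [hs.2]⟩)
  have := isProbabilityMeasure_boxMeasure hk hσ hε (hjac (t := h + d) fun s hs =>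
    ⟨by linarith [hs.1], by linarith [hs.2]⟩)
  refine (W1_map_le_inner_of_partial_transport (e := deriv γ h) hφ.measurable
    (τ := fun p => (2 * h - p.1, p.2)) (by fun_prop) (integrable_boxMeasure hφ hk hσ hε)
    (integrable_boxMeasure hφ hk hσ hε) hl (b₁ := 8 * K ^ 2 * (2 * d) ^ 5) (b₂ := 2 * (6 * d))
    (smul_map_reflect_boxMeasure_le o (hγ.of_le (by norm_num)) hunit hεd (by linarith)
      (fun i hi => hK i (by omega)) hKσ hl) ?_ ?_).trans ?_
  · filter_upwards [ae_boxMeasure_mem _ _ _ _] with p hp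
    exact dist_fermiChart_reflect_le_of_mem_box o hγ hunit hεd hK (hσd.trans hd₁) hKσ hp
  · filter_upwards [ae_prod_mem_of_ae_mem (ae_boxMeasure_mem (signedCurvature o γ) (h - d) σ ε)
      (ae_boxMeasure_mem (signedCurvature o γ) (h + d) σ ε)] with z ⟨hz₁, hz₂⟩
    linarith [dist_le_inner_sub_inner_add (hunit h) (fermiChart o γ z.1) (fermiChart o γ z.2),
      dist_fermiChart_le_of_mem_box o (hγ₂.differentiable two_ne_zero) hunit hεd hσd hz₁ hz₂]
  · have hloss : 0 ≤ 8 * K * d * σ * (8 * K ^ 2 * (2 * d) ^ 5) := by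
      have := hε.trans_le hεd
      positivity
    linarith

end Asymptotics

section Defect

variable {E : Type*} [NormedAddCommGroup E] [InnerProductSpace ℝ E]
  [Fact (Module.finrank ℝ E = 2)] [MeasurableSpace E] [BorelSpace E]
  (o : Orientation ℝ E (Fin 2)) {γ : ℝ → E} {h d σ ε K : ℝ}

attribute [local instance] FiniteDimensional.of_fact_finrank_eq_two

theorem abs_W1_testMeasure_sub_le (hγ : ContDiff ℝ 5 γ) (hunit : ∀ s, ‖deriv γ s‖ = 1)
    (hε : 0 < ε) (hεd : ε ≤ d) (hσ : 0 < σ) (hσd : σ ≤ d)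
    (hK : ∀ i ≤ 5, ∀ s ∈ Icc (h - 2 * d) (h + 2 * d), ‖iteratedDeriv i γ s‖ ≤ K)
    (hKd : 8 * K * d ≤ 1) (h₀ : InjOn (fermiChart o γ) (box (h - d) σ ε))
    (h₁ : InjOn (fermiChart o γ) (box (h + d) σ ε)) :
    |W1 (testMeasure o γ (h - d) σ ε) (testMeasure o γ (h + d) σ ε)
      - (2 * d - ‖deriv (deriv γ) h‖ ^ 2 / 3 * (d ^ 3 + d * ε ^ 2))| ≤
      320 * K ^ 2 * (d ^ 5 + σ * d ^ 2) := by
  have hK₁ : 1 ≤ K := by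
    simpa [hunit] using hK 1 (by norm_num) h ⟨by linarith, by linarith⟩
  have hγ₂ : ContDiff ℝ 2 γ := hγ.of_le (by norm_num)
  have hφ := (contDiff_fermiChart o hγ₂).continuous
  have hk := continuous_signedCurvature o hγ₂
  have hjac {t : ℝ} (ht : Ioo (t - ε) (t + ε) ⊆ Icc (h - 2 * d) (h + 2 * d)) :=
    one_sub_signedCurvature_mul_nonneg (σ := σ) o hγ₂ hunit (hK 2 (by norm_num)) (by nlinarith) ht
  have hjac₀ := hjac (t := h - d) fun s hs => ⟨by linarith [hs.1], by linarith [hs.2]⟩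
  have hjac₁ := hjac (t := h + d) fun s hs => ⟨by linarith [hs.1], by linarith [hs.2]⟩
  have := isProbabilityMeasure_boxMeasure hk hσ hε hjac₀
  have := isProbabilityMeasure_boxMeasure hk hσ hε hjac₁
  have hlower := inner_integral_sub_inner_integral_le_W1 hφ.measurable
    (integrable_boxMeasure (t := h - d) hφ hk hσ hε)
    (integrable_boxMeasure (t := h + d) hφ hk hσ hε) (hunit h)
  have hupper := W1_map_boxMeasure_le o (hγ.of_le (by norm_num)) hunit hε hεd hσ hσd
    (fun i hi => hK i (by omega)) hKd
  have hbarycenter := abs_inner_average_sub_average_sub_le hγ hunit hε hεd hK σ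
  rw [← integral_fermiChart_boxMeasure o hγ₂ hunit hσ hε hjac₀,
    ← integral_fermiChart_boxMeasure o hγ₂ hunit hσ hε hjac₁] at hbarycenter
  rw [testMeasure_eq_map o hγ₂ hunit hσ.le hε.le hjac₀ h₀,
    testMeasure_eq_map o hγ₂ hunit hσ.le hε.le hjac₁ h₁]
  have hd : 0 < d := hε.trans_le hεd
  have hKsq : K ≤ K ^ 2 := by nlinarith
  have hσsq : σ ^ 2 * d ≤ σ * d ^ 2 := by nlinarith [mul_pos hσ hd]
  have hbound : 2 * K * (2 * d) ^ 5 + K * σ ^ 2 * (2 * d)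
      + (8 * K ^ 2 * (2 * d) ^ 5 + 96 * K * d ^ 2 * σ) ≤ 320 * K ^ 2 * (d ^ 5 + σ * d ^ 2) :=
    calc _ = K * (64 * d ^ 5 + 2 * (σ ^ 2 * d) + 96 * (σ * d ^ 2)) + 256 * K ^ 2 * d ^ 5 := by ring
      _ ≤ K ^ 2 * (64 * d ^ 5 + 2 * (σ * d ^ 2) + 96 * (σ * d ^ 2)) + 256 * K ^ 2 * d ^ 5 := by
        gcongr
      _ ≤ 320 * K ^ 2 * (d ^ 5 + σ * d ^ 2) := by
        have : 0 ≤ K ^ 2 * (σ * d ^ 2) := by positivity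
        linarith
  rw [abs_le] at hbarycenter ⊢
  constructor <;> linarith [mul_nonneg (sq_nonneg K) (pow_pos hd 5).le]

theorem abs_norm_sub_W1_testMeasure_sub_le (hγ : ContDiff ℝ 5 γ) (hunit : ∀ s, ‖deriv γ s‖ = 1)
    (hε : 0 < ε) (hεd : ε ≤ d) (hσ : 0 < σ) (hσd : σ ≤ d)
    (hK : ∀ i ≤ 5, ∀ s ∈ Icc (h - 2 * d) (h + 2 * d), ‖iteratedDeriv i γ s‖ ≤ K)
    (hKd : 8 * K * d ≤ 1) (h₀ : InjOn (fermiChart o γ) (box (h - d) σ ε))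
    (h₁ : InjOn (fermiChart o γ) (box (h + d) σ ε)) :
    |‖γ (h + d) - γ (h - d)‖
        - W1 (testMeasure o γ (h - d) σ ε) (testMeasure o γ (h + d) σ ε)
      - ‖deriv (deriv γ) h‖ ^ 2 / 3 * (d * ε ^ 2)| ≤ 323 * K ^ 2 * (d ^ 5 + σ * d ^ 2) := by
  have hd : 0 < d := hε.trans_le hεd
  have hK₁ : 1 ≤ K := by
    simpa [hunit] using hK 1 (by norm_num) h ⟨by linarith, by linarith⟩
  have hchord := abs_norm_add_sub_sub_le hγ hunit hd
    fun i hi s hs => hK i hi s (Icc_sub_add_mono (by linarith) hs)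
  have hW := abs_W1_testMeasure_sub_le o hγ hunit hε hεd hσ hσd hK hKd h₀ h₁
  have hbound : (2 * K + K ^ 2) * d ^ 5 ≤ 3 * K ^ 2 * (d ^ 5 + σ * d ^ 2) :=
    mul_le_mul (by nlinarith) (le_add_of_nonneg_right (by positivity)) (by positivity)
      (by positivity)
  rw [abs_le] at hchord hW ⊢
  constructor <;> linarith

end Defect

lemma tendsto_norm_sub_div_of_hasDerivAt {F : Type*} [NormedAddCommGroup F] [NormedSpace ℝ F]
    {f : ℝ → F} {f' : F} {x : ℝ} (hf : HasDerivAt f f' x) :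
    Tendsto (fun t => ‖f x - f (x + t)‖ / t) (𝓝[>] 0) (𝓝 ‖f'‖) := by
  refine hf.tendsto_slope_zero_right.norm.congr' ?_
  filter_upwards [self_mem_nhdsWithin] with t ht
  rw [norm_smul, norm_inv, Real.norm_of_nonneg (le_of_lt ht), norm_sub_rev, inv_mul_eq_div]

section Limit

variable {E : Type*} [NormedAddCommGroup E] [InnerProductSpace ℝ E]
  [Fact (Module.finrank ℝ E = 2)] (o : Orientation ℝ E (Fin 2)) {γ : ℝ → E}

attribute [local instance] FiniteDimensional.of_fact_finrank_eq_two

lemma exists_pos_injOn_fermiChart_box (hγ : ContDiff ℝ 2 γ) (hunit : ∀ s, ‖deriv γ s‖ = 1)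
    (t : ℝ) :
    ∃ r > 0, ∀ {s σ ε}, |s - t| + ε ≤ r → σ ≤ r → InjOn (fermiChart o γ) (box s σ ε) := by
  obtain ⟨U, hU, hinj⟩ := exists_mem_nhds_injOn_fermiChart o hγ hunit t
  obtain ⟨ρ, hρ, hball⟩ := Metric.mem_nhds_iff.1 hU
  refine ⟨ρ, hρ, fun {s σ ε} hs hσ => ?_⟩
  refine hinj.mono fun p hp => hball ?_
  have hfst : |p.1 - t| < ρ :=
    calc |p.1 - t| ≤ |p.1 - s| + |s - t| := abs_sub_le _ _ _
      _ < ε + |s - t| := by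
        gcongr
        exact abs_lt.2 ⟨by linarith [hp.1.1], by linarith [hp.1.2]⟩
      _ ≤ ρ := by linarith
  have hsnd : |p.2| < ρ := (abs_lt.2 hp.2).trans_le hσ
  simpa [Prod.dist_eq, Real.dist_eq] using And.intro hfst hsnd

variable [MeasurableSpace E] [BorelSpace E]

theorem exists_eventually_abs_norm_sub_W1_testMeasure_sub_le (hγ : ContDiff ℝ 5 γ)
    (hunit : ∀ s, ‖deriv γ s‖ = 1) (t : ℝ) :
    ∃ C, ∀ᶠ δ in 𝓝[>] (0 : ℝ), ∀ {σ ε}, 0 < σ → σ ≤ δ / 2 → 0 < ε → ε ≤ δ / 2 →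
      |‖γ t - γ (t + δ)‖ - W1 (testMeasure o γ t σ ε) (testMeasure o γ (t + δ) σ ε)
        - ‖deriv (deriv γ) (t + δ / 2)‖ ^ 2 / 6 * (δ * ε ^ 2)| ≤ C * (δ ^ 5 + σ * δ ^ 2) := by
  obtain ⟨K, hK⟩ := exists_forall_norm_iteratedDeriv_le hγ (t - 1) (t + 2)
  have : 0 ≤ K := (norm_nonneg _).trans (hK 0 (by norm_num) t ⟨by linarith, by linarith⟩)
  have hKδ : ∀ᶠ δ in 𝓝[>] (0 : ℝ), 4 * K * δ < 1 :=
    ((by fun_prop : Continuous fun δ : ℝ => 4 * K * δ).tendsto' 0 0 (by simp)).mono_left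
      nhdsWithin_le_nhds |>.eventually_lt_const one_pos
  obtain ⟨r, hr, hinj⟩ := exists_pos_injOn_fermiChart_box o (hγ.of_le (by norm_num)) hunit t
  refine ⟨323 * K ^ 2, ?_⟩
  filter_upwards [hKδ, Ioo_mem_nhdsGT (lt_min one_pos (half_pos hr))]
    with δ hKδ ⟨hδ, hδr⟩ σ ε hσ hσδ hε hεδ
  have hδ₁ : δ ≤ 1 := (lt_min_iff.1 hδr).1.le
  have hδr : δ ≤ r / 2 := (lt_min_iff.1 hδr).2.le
  have hleft : t + δ / 2 - δ / 2 = t := by ring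
  have hright : t + δ / 2 + δ / 2 = t + δ := by ring
  have hdefect := abs_norm_sub_W1_testMeasure_sub_le (h := t + δ / 2) (d := δ / 2) (K := K) o hγ
    hunit hε hεδ hσ hσδ
    (fun i hi s hs => hK i hi s ⟨by linarith [hs.1], by linarith [hs.2]⟩)
    (by linarith) (hinj (by rw [hleft, sub_self, abs_zero]; linarith) (by linarith))
    (hinj (by rw [hright, add_sub_cancel_left, abs_of_pos hδ]; linarith) (by linarith))
  rw [hleft, hright, norm_sub_rev] at hdefect
  refine le_trans (le_of_eq ?_) (hdefect.trans ?_)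
  · ring_nf
  · gcongr <;> linarith

lemma tendsto_norm_sub_W1_testMeasure_div (hγ : ContDiff ℝ 5 γ)
    (hunit : ∀ s, ‖deriv γ s‖ = 1) (t : ℝ) {σ ε : ℝ → ℝ}
    (hpos : ∀ᶠ δ in 𝓝[>] 0, 0 < σ δ ∧ 0 < ε δ ∧ ε δ ≤ δ / 2)
    (hε : (fun δ => δ ^ 4) =o[𝓝[>] 0] fun δ => ε δ ^ 2)
    (hσ : (fun δ => σ δ * δ) =o[𝓝[>] 0] fun δ => ε δ ^ 2) :
    Tendsto (fun δ => (‖γ t - γ (t + δ)‖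
        - W1 (testMeasure o γ t (σ δ) (ε δ)) (testMeasure o γ (t + δ) (σ δ) (ε δ)))
          / (δ * ε δ ^ 2))
      (𝓝[>] 0) (𝓝 (‖deriv (deriv γ) t‖ ^ 2 / 6)) := by
  obtain ⟨C, hC⟩ := exists_eventually_abs_norm_sub_W1_testMeasure_sub_le o hγ hunit t
  have hcurv : Tendsto (fun δ => ‖deriv (deriv γ) (t + δ / 2)‖ ^ 2 / 6) (𝓝[>] 0)
      (𝓝 (‖deriv (deriv γ) t‖ ^ 2 / 6)) := by
    have hγ'' : ContDiff ℝ 3 (deriv (deriv γ)) := ContDiff.deriv' (n := 3) hγ.deriv'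
    refine Continuous.tendsto' ?_ 0 _ (by simp) |>.mono_left nhdsWithin_le_nhds
    exact ((hγ''.continuous.comp (by fun_prop)).norm.pow 2).div_const 6
  have hσδ : ∀ᶠ δ in 𝓝[>] (0 : ℝ), σ δ ≤ δ / 2 := by
    filter_upwards [hpos, hσ.def one_half_pos, self_mem_nhdsWithin] with δ hδ hσε (hδ₀ : 0 < δ)
    rw [Real.norm_of_nonneg (mul_pos hδ.1 hδ₀).le, Real.norm_of_nonneg (sq_nonneg _)] at hσε
    nlinarith
  have herror : Tendsto (fun δ => C * ((δ ^ 4 + σ δ * δ) / ε δ ^ 2)) (𝓝[>] 0) (𝓝 0) := by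
    simpa using (hε.add hσ).tendsto_div_nhds_zero.const_mul C
  rw [← add_zero (‖deriv (deriv γ) t‖ ^ 2 / 6)]
  refine (hcurv.add (squeeze_zero_norm' ?_ herror)).congr fun δ => add_sub_cancel _ _
  filter_upwards [hC, hpos, hσδ, self_mem_nhdsWithin] with δ hC ⟨hσ₀, hε₀, hεδ⟩ hσδ (hδ : 0 < δ)
  have hdefect := hC hσ₀ hσδ hε₀ hεδ
  set D := ‖γ t - γ (t + δ)‖
    - W1 (testMeasure o γ t (σ δ) (ε δ)) (testMeasure o γ (t + δ) (σ δ) (ε δ))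
  set κ := ‖deriv (deriv γ) (t + δ / 2)‖
  have hfactor : D / (δ * ε δ ^ 2) - κ ^ 2 / 6 =
      (δ * ε δ ^ 2)⁻¹ * (D - κ ^ 2 / 6 * (δ * ε δ ^ 2)) := by
    field_simp
  calc ‖D / (δ * ε δ ^ 2) - κ ^ 2 / 6‖
    _ = (δ * ε δ ^ 2)⁻¹ * |D - κ ^ 2 / 6 * (δ * ε δ ^ 2)| := by
        rw [hfactor, norm_mul, Real.norm_of_nonneg (by positivity), Real.norm_eq_abs]
    _ ≤ (δ * ε δ ^ 2)⁻¹ * (C * (δ ^ 5 + σ δ * δ ^ 2)) := by gcongr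
    _ = C * ((δ ^ 4 + σ δ * δ) / ε δ ^ 2) := by field_simp

theorem planar_curve_regime_epsilon_general (hγ : ContDiff ℝ 5 γ) (hunit : ∀ s, ‖deriv γ s‖ = 1)
    (t : ℝ) {σ ε : ℝ → ℝ} (hpos : ∀ᶠ δ in 𝓝[>] 0, 0 < σ δ ∧ 0 < ε δ ∧ ε δ ≤ δ / 2)
    (hε : (fun δ => δ ^ 4) =o[𝓝[>] 0] fun δ => ε δ ^ 2)
    (hσ : (fun δ => σ δ * δ) =o[𝓝[>] 0] fun δ => ε δ ^ 2) :
    Tendsto (fun δ => 6 / ε δ ^ 2 *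
        (1 - W1 (testMeasure o γ t (σ δ) (ε δ)) (testMeasure o γ (t + δ) (σ δ) (ε δ))
          / ‖γ t - γ (t + δ)‖))
      (𝓝[>] 0) (𝓝 (‖deriv (deriv γ) t‖ ^ 2)) := by
  have hchord := tendsto_norm_sub_div_of_hasDerivAt (hγ.differentiable (by norm_num) t).hasDerivAt
  rw [hunit] at hchord
  have hquot := ((tendsto_norm_sub_W1_testMeasure_div o hγ hunit t hpos hε hσ).const_mul 6).div
    hchord one_ne_zero
  rw [mul_div_cancel₀ _ (by norm_num), div_one] at hquot
  refine hquot.congr' ?_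
  filter_upwards [hpos, self_mem_nhdsWithin, hchord.eventually_ne one_ne_zero]
    with δ ⟨_, hε₀, _⟩ (hδ : 0 < δ) hchord_ne
  have hchord₀ : ‖γ t - γ (t + δ)‖ ≠ 0 := (div_ne_zero_iff.1 hchord_ne).1
  simp only [Pi.div_apply]
  field_simp

end Limit

section PrincipalNormal

variable {E : Type*} [NormedAddCommGroup E] [InnerProductSpace ℝ E]
  [Fact (Module.finrank ℝ E = 2)] (o : Orientation ℝ E (Fin 2)) {γ n : ℝ → E} {t σ ε : ℝ}

attribute [local instance] FiniteDimensional.of_fact_finrank_eq_two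

local notation "J" => o.rightAngleRotation

lemma image_normal_chart_box_eq (hunit : ∀ s, ‖deriv γ s‖ = 1)
    (hn : ∀ s ∈ Ioo (t - ε) (t + ε), ‖n s‖ = 1 ∧ ⟪deriv γ s, n s⟫_ℝ = 0) :
    (fun p : ℝ × ℝ => γ p.1 + p.2 • n p.1) '' box t σ ε = fermiChart o γ '' box t σ ε := by
  have hsign {s : ℝ} (hs : s ∈ Ioo (t - ε) (t + ε)) :
      n s = J (deriv γ s) ∨ n s = -J (deriv γ s) := by
    obtain ⟨hnorm, horth⟩ := hn s hs
    have hcollinear := eq_inner_smul_rightAngleRotation_of_inner_eq_zero o (hunit s) horth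
    have hcoeff : |⟪J (deriv γ s), n s⟫_ℝ| = 1 := by
      rw [hcollinear, norm_smul] at hnorm
      simpa [hunit] using hnorm
    rcases eq_or_eq_neg_of_abs_eq hcoeff with hone | hone <;> rw [hone] at hcollinear
    · exact .inl (by simpa using hcollinear)
    · exact .inr (by simpa using hcollinear)
  have hneg {s β : ℝ} (hp : (s, β) ∈ box t σ ε) : (s, -β) ∈ box t σ ε :=
    ⟨hp.1, neg_lt_neg hp.2.2, neg_lt.1 hp.2.1⟩
  ext x
  constructor <;> rintro ⟨⟨s, β⟩, hp, rfl⟩ <;> rcases hsign hp.1 with hs | hs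
  · exact ⟨(s, β), hp, by simp [fermiChart, hs]⟩
  · exact ⟨(s, -β), hneg hp, by simp [fermiChart, hs]⟩
  · exact ⟨(s, β), hp, by simp [fermiChart, hs]⟩
  · exact ⟨(s, -β), hneg hp, by simp [fermiChart, hs]⟩

lemma normRestrict_principal_normal_chart_image_eq_testMeasure [MeasurableSpace E] [BorelSpace E]
    (hγ : ContDiff ℝ 2 γ) (hunit : ∀ s, ‖deriv γ s‖ = 1)
    (hcurv : ∀ s ∈ Ioo (t - ε) (t + ε), deriv (deriv γ) s ≠ 0) :
    normRestrict ((fun p : ℝ × ℝ => γ p.1 + p.2 • ‖deriv (deriv γ) p.1‖⁻¹ • deriv (deriv γ) p.1) ''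
      box t σ ε) = testMeasure o γ t σ ε := by
  rw [testMeasure, image_normal_chart_box_eq o
    (n := fun s => ‖deriv (deriv γ) s‖⁻¹ • deriv (deriv γ) s) hunit fun s hs => ⟨?_, ?_⟩]
  · exact norm_smul_inv_norm (𝕜 := ℝ) (hcurv s hs)
  · rw [real_inner_smul_right,
      inner_deriv_eq_zero_of_norm_eq_one hγ.differentiable_deriv_two hunit, mul_zero]

end PrincipalNormal

lemma isLittleO_sq_of_mul_le {c : ℝ} {σ ε : ℝ → ℝ} (hc : 0 < c)
    (hε : ∀ᶠ δ in 𝓝[>] 0, c * δ ≤ ε δ) (hσ : σ =o[𝓝[>] 0] fun δ => δ) :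
    (fun δ => δ ^ 4) =o[𝓝[>] 0] (fun δ => ε δ ^ 2) ∧
      (fun δ => σ δ * δ) =o[𝓝[>] 0] fun δ => ε δ ^ 2 := by
  have hlin : (fun δ => δ) =O[𝓝[>] 0] ε := by
    refine .of_bound c⁻¹ ?_
    filter_upwards [hε, self_mem_nhdsWithin] with δ hδε (hδ : 0 < δ)
    rw [Real.norm_of_nonneg hδ.le, ← div_eq_inv_mul, le_div_iff₀' hc]
    exact hδε.trans (le_abs_self _)
  have hsq : (fun δ => δ ^ 2) =O[𝓝[>] 0] fun δ => ε δ ^ 2 := hlin.pow 2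
  refine ⟨((Asymptotics.isLittleO_pow_pow (by norm_num)).mono nhdsWithin_le_nhds).trans_isBigO hsq,
    ?_⟩
  simpa only [sq] using (hσ.mul_isBigO (Asymptotics.isBigO_refl _ _)).trans_isBigO
    (by simpa only [sq] using hsq)

/-- Regime `ε = Θ(δ)`, `σ = o(δ)`: the rescaled coarse extrinsic curvature of a planar curve
recovers `1/R²`. -/
theorem planar_curve_regime_epsilon
    (δ₀ : ℝ) (hδ₀ : 0 < δ₀)
    (γ : ℝ → EuclideanSpace ℝ (Fin 2)) (hγ : ContDiff ℝ (⊤ : ℕ∞) γ)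
    (hunit : ∀ α : ℝ, ‖deriv γ α‖ = 1)
    (hcurv : ∀ α ∈ Icc (-δ₀) (2 * δ₀), deriv (deriv γ) α ≠ 0)
    (R : ℝ → ℝ) (hR : ∀ α : ℝ, R α = ‖deriv (deriv γ) α‖⁻¹)
    (n : ℝ → EuclideanSpace ℝ (Fin 2)) (hn : ∀ α : ℝ, n α = R α • deriv (deriv γ) α)
    (φ : ℝ × ℝ → EuclideanSpace ℝ (Fin 2)) (hφ : ∀ p : ℝ × ℝ, φ p = γ p.1 + p.2 • n p.1)
    (hinj : InjOn φ (Icc (-δ₀) (2 * δ₀) ×ˢ Icc (-δ₀) δ₀))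
    (hreach : ∀ α ∈ Icc (-δ₀) (2 * δ₀), δ₀ < R α)
    (μ : ℝ → ℝ → ℝ → Measure (EuclideanSpace ℝ (Fin 2)))
    (hμ : ∀ t σ ε : ℝ, μ t σ ε = normRestrict (φ '' (Ioo (t - ε) (t + ε) ×ˢ Ioo (-σ) σ)))
    (σf εf : ℝ → ℝ)
    (hpos : ∀ δ ∈ Ioc (0:ℝ) δ₀, 0 < σf δ ∧ 0 < εf δ ∧ max (σf δ) (εf δ) ≤ δ / 4)
    (c C' : ℝ) (hc : 0 < c) (hC' : 0 < C')
    (hΘ : ∀ δ ∈ Ioc (0:ℝ) δ₀, c * δ ≤ εf δ ∧ εf δ ≤ C' * δ)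
    (ho : Tendsto (fun δ => σf δ / δ) (nhdsWithin 0 (Ioi 0)) (nhds 0)) :
    Tendsto (fun δ => 6 / εf δ ^ 2 *
        (1 - W1 (μ 0 (σf δ) (εf δ)) (μ δ (σf δ) (εf δ)) / ‖γ 0 - γ δ‖))
      (nhdsWithin 0 (Ioi 0)) (nhds (1 / R 0 ^ 2)) := by
  have : Fact (Module.finrank ℝ (EuclideanSpace ℝ (Fin 2)) = 2) := ⟨finrank_euclideanSpace_fin⟩
  let o := (EuclideanSpace.basisFun (Fin 2) ℝ).toBasis.orientation
  have hγ₅ : ContDiff ℝ 5 γ := contDiff_infty.1 hγ 5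
  have hsmall : ∀ᶠ δ in 𝓝[>] (0 : ℝ), δ ∈ Ioc 0 δ₀ := Ioc_mem_nhdsGT hδ₀
  have htest {t σ ε : ℝ} (ht : Ioo (t - ε) (t + ε) ⊆ Icc (-δ₀) (2 * δ₀)) :
      μ t σ ε = testMeasure o γ t σ ε := by
    rw [hμ, funext hφ]
    simp_rw [hn, hR]
    exact normRestrict_principal_normal_chart_image_eq_testMeasure o (hγ₅.of_le (by norm_num)) hunit
      fun s hs => hcurv s (ht hs)
  obtain ⟨hε, hσ⟩ := isLittleO_sq_of_mul_le hc (hsmall.mono fun δ hδ => (hΘ δ hδ).1)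
    ((Asymptotics.isLittleO_iff_tendsto' (hsmall.mono fun δ hδ h => absurd h hδ.1.ne')).2 ho)
  have hlimit := planar_curve_regime_epsilon_general o hγ₅ hunit 0
    (hsmall.mono fun δ hδ => ⟨(hpos δ hδ).1, (hpos δ hδ).2.1, by
      linarith [hδ.1, (le_max_right _ _).trans (hpos δ hδ).2.2]⟩) hε hσ
  rw [hR, inv_pow, one_div, inv_inv]
  refine hlimit.congr' (hsmall.mono fun δ hδ => ?_)
  have hεδ : εf δ ≤ δ / 4 := (le_max_right _ _).trans (hpos δ hδ).2.2
  have ⟨hδ₁, hδ₂⟩ := hδ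
  simp only [zero_add]
  rw [htest, htest]
  all_goals exact fun s hs => ⟨by linarith [hs.1], by linarith [hs.2]⟩
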